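/- arXiv:math/9905083 — 2 statements merged into one kernel-verified Lean document; each statement's English description precedes it below -/
import Mathlib

section
/- For every nonnegative integer l, every real t, and every real α ≥ 0, Σ_{n≥0} (t^n/n!) · Σ_{m=0}^{n} α^m · g^O_{n,m,l} = E_{U∈O(l)} det(I + αU) · exp(t·Tr(U)), where g^O_{n,m,l} is the number of involutions of {1,…,n} with exactly m fixed points and longest increasing subsequence of length at most l. -/
open MeasureTheory Matrix

noncomputable section

/-- `lisLE π l` means the longest increasing subsequence of the permutation `π`
has length at most `l`. -/
def lisLE {N : ℕ} (π : Equiv.Perm (Fin N)) (l : ℕ) : Prop :=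
  ∀ (k : ℕ) (f : Fin k → Fin N), StrictMono f → StrictMono (fun i => π (f i)) → k ≤ l

/-- `g^O_{n,m,l}`: the number of involutions of `{1,…,n}` with exactly `m` fixed points
and longest increasing subsequence of length at most `l`. -/
def gOCount (n m l : ℕ) : ℕ :=
  Nat.card {π : Equiv.Perm (Fin n) //
    π * π = 1 ∧ (Finset.univ.filter fun x => π x = x).card = m ∧ lisLE π l}

instance (l : ℕ) : MeasurableSpace (Matrix.orthogonalGroup (Fin l) ℝ) := borel _
instance (l : ℕ) : BorelSpace (Matrix.orthogonalGroup (Fin l) ℝ) := ⟨rfl⟩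

/-!
By invariant theory, the tensors in `(ℝ^l)^⊗(n+m)` fixed by `O(l)` are spanned by the perfect
matchings of the slots: averaging over `O(l)` is compared with a Gaussian average, which Wick's
formula expands into matchings. Antisymmetrizing in the last `m` slots kills a matching which joins
two of them, so the remaining ones are encoded by the arcs among the first `n` slots: an
involution of `{1,…,n}` with `m` fixed points. An antisymmetrization over `l + 1` indices vanishes
on `ℝ^l`, which allows one to straighten every involution with an increasing subsequence of length
`l + 1`; the involutions without such a subsequence give linearly independent tensors. Hence
`g^O_{n,m,l}` is the dimension of a space of invariants, that is, the integral of the character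
`tr(Λ^m U) tr(U)^n`, and the generating function follows from `det(I + αU) = Σ α^m tr(Λ^m U)`.
-/

section Gaussian

open ProbabilityTheory

open scoped NNReal

/-- The `k`-th moment of the standard Gaussian distribution. -/
def gaussMoment (k : ℕ) : ℝ := ∫ x, x ^ k ∂gaussianReal 0 1

lemma integrable_pow_gaussianReal (m : ℝ) (v : ℝ≥0) (k : ℕ) :
    Integrable (fun x : ℝ => x ^ k) (gaussianReal m v) := by
  refine (memLp_id_gaussianReal (μ := m) (v := v) k).integrable_norm_pow'.mono'
    (by fun_prop) (.of_forall fun x => ?_)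
  simp

lemma integrable_gaussianReal_iff {m : ℝ} {v : ℝ≥0} (hv : v ≠ 0) {f : ℝ → ℝ} :
    Integrable f (gaussianReal m v) ↔ Integrable fun x => f x * gaussianPDFReal m v x := by
  rw [gaussianReal_of_var_ne_zero m hv,
    integrable_withDensity_iff (measurable_gaussianPDF m v)
      (.of_forall fun _ => ENNReal.ofReal_lt_top)]
  simp only [gaussianPDF, ENNReal.toReal_ofReal (gaussianPDFReal_nonneg m v _)]

lemma hasDerivAt_gaussianPDFReal {m : ℝ} {v : ℝ≥0} (hv : v ≠ 0) (x : ℝ) :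
    HasDerivAt (gaussianPDFReal m v) (-((x - m) / v * gaussianPDFReal m v x)) x := by
  have hexp : HasDerivAt (fun x : ℝ => -(x - m) ^ 2 / (2 * (v : ℝ))) (-((x - m) / v)) x := by
    refine ((((hasDerivAt_id x).sub_const m).pow 2).neg.div_const (2 * (v : ℝ))).congr_deriv ?_
    have : (v : ℝ) ≠ 0 := by exact_mod_cast hv
    simp only [Nat.cast_ofNat, id_eq, Nat.add_one_sub_one, pow_one, mul_one]
    field_simp
  refine (hexp.exp.const_mul (√(2 * Real.pi * v))⁻¹).congr_deriv ?_
  rw [gaussianPDFReal]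
  ring

lemma gaussMoment_zero : gaussMoment 0 = 1 := by simp [gaussMoment]

lemma gaussMoment_one : gaussMoment 1 = 0 := by simp [gaussMoment]

lemma gaussMoment_eq_integral (k : ℕ) :
    gaussMoment k = ∫ x, x ^ k * gaussianPDFReal 0 1 x := by
  rw [gaussMoment, integral_gaussianReal_eq_integral_smul one_ne_zero]
  simp only [smul_eq_mul, mul_comm]

lemma gaussMoment_add_two (k : ℕ) : gaussMoment (k + 2) = (k + 1) * gaussMoment k := by
  have hint (j : ℕ) : Integrable fun x : ℝ => x ^ j * gaussianPDFReal 0 1 x :=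
    (integrable_gaussianReal_iff one_ne_zero).mp (integrable_pow_gaussianReal 0 1 j)
  have hmul (x : ℝ) : x ^ (k + 1) * -(x * gaussianPDFReal 0 1 x) =
      -(x ^ (k + 2) * gaussianPDFReal 0 1 x) := by ring
  have hparts := integral_mul_deriv_eq_deriv_mul_of_integrable
    (u := fun x : ℝ => x ^ (k + 1)) (u' := fun x : ℝ => (k + 1) * x ^ k)
    (v := gaussianPDFReal 0 1) (v' := fun x => -(x * gaussianPDFReal 0 1 x))
    (fun x _ => by simpa using hasDerivAt_pow (k + 1) x)
    (fun x _ => by simpa using hasDerivAt_gaussianPDFReal (m := 0) one_ne_zero x)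
    ((hint (k + 2)).neg.congr (.of_forall fun x => (hmul x).symm))
    (((hint k).const_mul (k + 1 : ℝ)).congr (.of_forall fun x => (mul_assoc _ _ _).symm))
    (hint (k + 1))
  simp only [hmul, integral_neg, mul_assoc, integral_const_mul, neg_inj] at hparts
  rw [gaussMoment_eq_integral, gaussMoment_eq_integral, hparts]

instance : (gaussianReal 0 1).IsOpenPosMeasure :=
  (gaussianReal_absolutelyContinuous' 0 one_ne_zero).isOpenPosMeasure

variable {ι β : Type*} [Fintype β] [DecidableEq β]

/-- The correlation `E ∏_{k ∈ s} g_{a k}` of independent standard Gaussians `g_b`, see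
`integral_prod_gaussianReal`. -/
def gaussCorr (s : Finset ι) (a : ι → β) : ℝ :=
  ∏ b, gaussMoment {k ∈ s | a k = b}.card

lemma prod_comp_eq_prod_pow_card {R : Type*} [CommMonoid R] (s : Finset ι) (a : ι → β)
    (g : β → R) : ∏ k ∈ s, g (a k) = ∏ b, g b ^ {k ∈ s | a k = b}.card := by
  simp only [← Finset.prod_fiberwise s a, ← Finset.prod_const]
  exact Finset.prod_congr rfl fun b _ => Finset.prod_congr rfl fun k hk => by
    rw [(Finset.mem_filter.mp hk).2]

omit [DecidableEq β] in
lemma integrable_prod_gaussianReal (s : Finset ι) (a : ι → β) :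
    Integrable (fun g : β → ℝ => ∏ k ∈ s, g (a k)) (Measure.pi fun _ => gaussianReal 0 1) := by
  classical
  simp_rw [prod_comp_eq_prod_pow_card]
  exact Integrable.fintype_prod fun b => integrable_pow_gaussianReal 0 1 _

lemma integral_prod_gaussianReal (s : Finset ι) (a : ι → β) :
    ∫ g : β → ℝ, ∏ k ∈ s, g (a k) ∂(Measure.pi fun _ => gaussianReal 0 1) = gaussCorr s a := by
  simp_rw [prod_comp_eq_prod_pow_card]
  exact integral_fintype_prod_eq_prod fun b (x : ℝ) => x ^ {k ∈ s | a k = b}.card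

lemma gaussCorr_eq_mul (s : Finset ι) (a : ι → β) (b : β) :
    gaussCorr s a = gaussMoment {k ∈ s | a k = b}.card * gaussCorr {k ∈ s | a k ≠ b} a := by
  rw [gaussCorr, gaussCorr, ← Finset.mul_prod_erase _ _ (Finset.mem_univ b),
    ← Finset.mul_prod_erase _ _ (Finset.mem_univ b), Finset.filter_filter]
  have : {k ∈ s | a k ≠ b ∧ a k = b} = ∅ := by simp +contextual
  rw [this, Finset.card_empty, gaussMoment_zero, one_mul]
  congr 1
  refine Finset.prod_congr rfl fun b' hb' => ?_
  rw [Finset.filter_filter]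
  congr 2 with k
  have := Finset.ne_of_mem_erase hb'
  grind

variable [DecidableEq ι]

lemma gaussCorr_eq_sum {s : Finset ι} (a : ι → β) {x : ι} (hx : x ∈ s) :
    gaussCorr s a =
      ∑ y ∈ s.erase x, if a y = a x then gaussCorr ((s.erase x).erase y) a else 0 := by
  set q := {y ∈ s.erase x | a y = a x}.card with hq
  set R := gaussCorr {y ∈ s | a y ≠ a x} a with hR
  have hs : gaussCorr s a = gaussMoment (q + 1) * R := by
    rw [gaussCorr_eq_mul s a (a x), hq, Finset.filter_erase, Finset.card_erase_add_one (by simpa)]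
  have hsum : ∀ y ∈ {y ∈ s.erase x | a y = a x},
      gaussCorr ((s.erase x).erase y) a = gaussMoment (q - 1) * R := by
    intro y hy
    rw [gaussCorr_eq_mul _ a (a x), Finset.filter_erase, Finset.card_erase_of_mem hy, ← hq, hR]
    congr 2
    grind
  rw [← Finset.sum_filter, Finset.sum_congr rfl hsum, Finset.sum_const, hs, ← hq, nsmul_eq_mul]
  cases q with
  | zero => simp [gaussMoment_one]
  | succ k => simp [gaussMoment_add_two, mul_assoc]

end Gaussian

section Wick

variable {ι : Type*}

/-- `M` is a perfect matching of the points of `s`, encoded as the involution exchanging the two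
ends of each arc. -/
structure IsMatchingOn (M : Equiv.Perm ι) (s : Finset ι) : Prop where
  involutive : Function.Involutive M
  apply_ne_iff : ∀ k, M k ≠ k ↔ k ∈ s

/-- The tensor attached to a matching `M`: the indicator that a colouring is constant along
the arcs of `M`. -/
def matchingTensor {κ : Type*} [Fintype ι] [DecidableEq κ] (M : Equiv.Perm ι) (c : ι → κ) : ℝ :=
  if ∀ k, c (M k) = c k then 1 else 0

lemma isMatchingOn_one : IsMatchingOn (1 : Equiv.Perm ι) ∅ where
  involutive _ := rfl
  apply_ne_iff := by simp

namespace IsMatchingOn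

variable {M : Equiv.Perm ι} {s : Finset ι}

lemma apply_eq (hM : IsMatchingOn M s) {k : ι} (hk : k ∉ s) : M k = k :=
  not_not.mp fun h => hk ((hM.apply_ne_iff k).mp h)

lemma mul_swap [DecidableEq ι] {x y : ι} (hM : IsMatchingOn M ((s.erase x).erase y)) (hx : x ∈ s)
    (hy : y ∈ s) (hxy : x ≠ y) : IsMatchingOn (M * Equiv.swap x y) s := by
  have := hM.apply_eq (k := x) (by simp)
  have := hM.apply_eq (k := y) (by simp)
  have hMM := hM.involutive
  have hne := hM.apply_ne_iff
  have hval (k : ι) :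
      (M * Equiv.swap x y) k = if k = x then y else if k = y then x else M k := by
    rw [Equiv.Perm.mul_apply, Equiv.swap_apply_def]
    grind
  constructor
  · intro k
    simp only [hval]
    have := hMM k
    grind
  · intro k
    rw [hval]
    grind

end IsMatchingOn

variable [Fintype ι] [DecidableEq ι]

lemma matchingTensor_mul_swap {κ : Type*} [DecidableEq κ] {M : Equiv.Perm ι} {x y : ι}
    (hx : M x = x) (hy : M y = y) (c : ι → κ) :
    matchingTensor (M * Equiv.swap x y) c = if c y = c x then matchingTensor M c else 0 := by
  rw [matchingTensor, matchingTensor, ← ite_and]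
  refine if_congr ⟨fun h => ?_, fun ⟨_, h⟩ k => ?_⟩ rfl rfl
  · have hxy : c y = c x := by simpa [hy] using h x
    refine ⟨hxy, fun k => ?_⟩
    have := h k
    rw [Equiv.Perm.mul_apply, Equiv.swap_apply_def] at this
    grind
  · rw [Equiv.Perm.mul_apply, h, Equiv.swap_apply_def]
    grind

omit [DecidableEq ι] in
/-- **Wick's formula**, in qualitative form: Gaussian correlations are combinations of
indicators of perfect matchings. -/
theorem gaussCorr_mem_span {β : Type*} [Fintype β] [DecidableEq β] (s : Finset ι) :
    (gaussCorr s : (ι → β) → ℝ) ∈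
      Submodule.span ℝ {f | ∃ M, IsMatchingOn M s ∧ f = matchingTensor M} := by
  classical
  induction s using Finset.strongInduction with
  | H s ih =>
    rcases s.eq_empty_or_nonempty with rfl | ⟨x, hx⟩
    · refine Submodule.subset_span ⟨1, isMatchingOn_one, ?_⟩
      ext a
      simp [gaussCorr, gaussMoment_zero, matchingTensor]
    · let pairing (y : ι) : ((ι → β) → ℝ) →ₗ[ℝ] (ι → β) → ℝ :=
        LinearMap.mulLeft ℝ fun a => if a y = a x then 1 else 0
      have hsum : (gaussCorr s : (ι → β) → ℝ) =
          ∑ y ∈ s.erase x, pairing y (gaussCorr ((s.erase x).erase y)) := by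
        ext a
        simp [gaussCorr_eq_sum a hx, pairing]
      rw [hsum]
      refine Submodule.sum_mem _ fun y hy => ?_
      have hlt : (s.erase x).erase y ⊂ s :=
        (Finset.erase_subset _ _).trans_ssubset (Finset.erase_ssubset hx)
      have h := Submodule.mem_map_of_mem (f := pairing y) (ih _ hlt)
      rw [Submodule.map_span] at h
      refine Submodule.span_mono ?_ h
      rintro _ ⟨_, ⟨M, hM, rfl⟩, rfl⟩
      refine ⟨M * Equiv.swap x y, hM.mul_swap hx (Finset.mem_of_mem_erase hy)
        (Finset.ne_of_mem_erase hy).symm, ?_⟩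
      ext a
      simp [pairing, matchingTensor_mul_swap (hM.apply_eq (k := x) (by simp))
        (hM.apply_eq (k := y) (by simp))]

end Wick

section Matching

/-- `M` is a perfect matching of `ι`, encoded as the fixed-point-free involution exchanging the
two ends of each arc. -/
structure IsMatching {ι : Type*} (M : Equiv.Perm ι) : Prop where
  involutive : Function.Involutive M
  apply_ne : ∀ k, M k ≠ k

variable {ι : Type*} {M : Equiv.Perm ι}

lemma isMatchingOn_univ [Fintype ι] : IsMatchingOn M Finset.univ ↔ IsMatching M :=
  ⟨fun h => ⟨h.involutive, fun k => (h.apply_ne_iff k).mpr (Finset.mem_univ k)⟩,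
    fun h => ⟨h.involutive, fun k => iff_of_true (h.apply_ne k) (Finset.mem_univ k)⟩⟩

lemma IsMatching.exists_equiv_sum.{u} {ι : Type u} {M : Equiv.Perm ι} (hM : IsMatching M) :
    ∃ (ρ : Type u) (e : ρ ⊕ ρ ≃ ι), ∀ x, M (e x) = e x.swap := by
  classical
  let _ : LinearOrder ι := linearOrderOfSTO WellOrderingRel
  have hMM := hM.involutive
  let ρ := {k : ι // k < M k}
  have hbij : Function.Bijective (Sum.elim (fun k : ρ => (k : ι)) fun k : ρ => M k) := by
    constructor
    · rintro (⟨x, hx⟩ | ⟨x, hx⟩) (⟨y, hy⟩ | ⟨y, hy⟩) h <;>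
        simp only [Sum.elim_inl, Sum.elim_inr] at h
      · exact congrArg Sum.inl (Subtype.ext h)
      · rw [h, hMM] at hx
        exact absurd hx hy.asymm
      · rw [← h, hMM] at hy
        exact absurd hx hy.asymm
      · exact congrArg Sum.inr (Subtype.ext (M.injective h))
    · intro k
      rcases (hM.apply_ne k).lt_or_gt with h | h
      · exact ⟨Sum.inr ⟨M k, by rwa [hMM]⟩, hMM k⟩
      · exact ⟨Sum.inl ⟨k, h⟩, rfl⟩
  refine ⟨ρ, Equiv.ofBijective _ hbij, ?_⟩
  rintro (x | x)
  · rfl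
  · exact hMM x

end Matching

section TensorPow

variable {ι ι' κ R : Type*} [Fintype ι] [Fintype ι']

/-- The `ι`-th tensor power of a matrix, with rows and columns indexed by the colourings
`ι → κ`. -/
def tensorPow (ι : Type*) [Fintype ι] [CommSemiring R] (A : Matrix κ κ R) :
    Matrix (ι → κ) (ι → κ) R :=
  Matrix.of fun c d => ∏ k, A (c k) (d k)

section CommSemiring

variable [CommSemiring R]

lemma tensorPow_apply (A : Matrix κ κ R) (c d : ι → κ) :
    tensorPow ι A c d = ∏ k, A (c k) (d k) := rfl

lemma tensorPow_transpose (A : Matrix κ κ R) : tensorPow ι Aᵀ = (tensorPow ι A)ᵀ := rfl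

lemma tensorPow_conjTranspose [StarRing R] (A : Matrix κ κ R) :
    tensorPow ι Aᴴ = (tensorPow ι A)ᴴ := by
  ext c d
  simp [tensorPow_apply]

lemma tensorPow_one [DecidableEq κ] : tensorPow ι (1 : Matrix κ κ R) = 1 := by
  ext c d
  simp [tensorPow_apply, Matrix.one_apply, Finset.prod_ite_zero, funext_iff]

lemma tensorPow_sumElim (A : Matrix κ κ R) (c d : ι → κ) (c' d' : ι' → κ) :
    tensorPow (ι ⊕ ι') A (Sum.elim c c') (Sum.elim d d') =
      tensorPow ι A c d * tensorPow ι' A c' d' := by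
  simp [tensorPow_apply]

lemma continuous_tensorPow [TopologicalSpace R] [ContinuousMul R] :
    Continuous (tensorPow ι : Matrix κ κ R → Matrix (ι → κ) (ι → κ) R) :=
  continuous_matrix fun _ _ => continuous_finsetProd _ fun _ _ => continuous_id.matrix_elem _ _

variable [DecidableEq ι] [DecidableEq ι'] [Fintype κ]

lemma tensorPow_mul (A B : Matrix κ κ R) :
    tensorPow ι (A * B) = tensorPow ι A * tensorPow ι B := by
  ext c d
  simp only [tensorPow_apply, Matrix.mul_apply, ← Finset.prod_mul_distrib]
  rw [Finset.prod_univ_sum, Fintype.piFinset_univ]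

lemma tensorPow_mulVec_comp (e : ι ≃ ι') (A : Matrix κ κ R) (f : (ι → κ) → R) (c : ι' → κ) :
    (tensorPow ι A *ᵥ f) (c ∘ e) = (tensorPow ι' A *ᵥ fun d => f (d ∘ e)) c := by
  simp only [mulVec, dotProduct, tensorPow_apply]
  refine Fintype.sum_equiv (e.arrowCongr (Equiv.refl κ)) _ _ fun d => ?_
  simp [← e.prod_comp, Function.comp_def]

end CommSemiring

open scoped ComplexOrder in
lemma posSemidef_tensorPow {𝕜 : Type*} [RCLike 𝕜] [Finite κ] {S : Matrix κ κ 𝕜}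
    (hS : S.PosSemidef) : (tensorPow ι S).PosSemidef := by
  classical
  cases nonempty_fintype κ
  open scoped MatrixOrder in
  obtain ⟨B, rfl⟩ := CStarAlgebra.nonneg_iff_eq_star_mul_self.mp hS.nonneg
  rw [star_eq_conjTranspose, tensorPow_mul, tensorPow_conjTranspose]
  exact posSemidef_conjTranspose_mul_self _

variable [DecidableEq ι] [Fintype κ] [DecidableEq κ] {U : Matrix κ κ ℝ}

lemma tensorPow_mulVec_matchingTensor_sumComm (hU : U ∈ Matrix.orthogonalGroup κ ℝ) :
    tensorPow (ι ⊕ ι) U *ᵥ matchingTensor (Equiv.sumComm ι ι) =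
      matchingTensor (Equiv.sumComm ι ι) := by
  have hT : tensorPow ι U * (tensorPow ι U)ᵀ = 1 := by
    rw [← tensorPow_transpose, ← tensorPow_mul, ← tensorPow_one]
    exact congrArg _ ((Matrix.mem_orthogonalGroup_iff κ ℝ).mp hU)
  have hmatch (p q : ι → κ) :
      matchingTensor (Equiv.sumComm ι ι) (Sum.elim p q) = if p = q then 1 else 0 := by
    simp only [matchingTensor, Sum.forall, Equiv.sumComm_apply, Sum.swap_inl, Sum.swap_inr,
      Sum.elim_inl, Sum.elim_inr, funext_iff]
    grind
  ext c
  obtain ⟨⟨p, q⟩, rfl⟩ := (Equiv.sumArrowEquivProdArrow ι ι κ).symm.surjective c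
  change (tensorPow (ι ⊕ ι) U *ᵥ _) (Sum.elim p q) = matchingTensor _ (Sum.elim p q)
  rw [hmatch, ← Matrix.one_apply, ← hT, mulVec, dotProduct,
    ← (Equiv.sumArrowEquivProdArrow ι ι κ).symm.sum_comp, Fintype.sum_prod_type, Matrix.mul_apply]
  refine Finset.sum_congr rfl fun p' _ => ?_
  change ∑ q', tensorPow (ι ⊕ ι) U (Sum.elim p q) (Sum.elim p' q') *
    matchingTensor _ (Sum.elim p' q') = _
  simp [hmatch, tensorPow_sumElim]

lemma tensorPow_mulVec_matchingTensor (hU : U ∈ Matrix.orthogonalGroup κ ℝ) {M : Equiv.Perm ι}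
    (hM : IsMatching M) : tensorPow ι U *ᵥ matchingTensor M = matchingTensor M := by
  classical
  obtain ⟨ρ, e, he⟩ := hM.exists_equiv_sum
  have : Finite ρ := .of_injective (e ∘ Sum.inl) (e.injective.comp Sum.inl_injective)
  cases nonempty_fintype ρ
  have hcomp (c : ι → κ) : matchingTensor (Equiv.sumComm ρ ρ) (c ∘ e) = matchingTensor M c := by
    refine if_congr ?_ rfl rfl
    rw [← e.forall_congr_right (q := fun k => c (M k) = c k)]
    simp [he]
  ext c
  have h := congrFun (tensorPow_mulVec_matchingTensor_sumComm (ι := ρ) hU) (c ∘ e)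
  rw [tensorPow_mulVec_comp] at h
  simpa only [hcomp] using h

end TensorPow

section Positivity

variable {κ : Type*} [Fintype κ] [DecidableEq κ]

open scoped ComplexOrder in
lemma exists_unitary_mul_posSemidef {𝕜 : Type*} [RCLike 𝕜] {A : Matrix κ κ 𝕜} (hA : A.det ≠ 0) :
    ∃ U ∈ Matrix.unitaryGroup κ 𝕜, ∃ S : Matrix κ κ 𝕜, S.PosSemidef ∧ A = U * S := by
  open scoped MatrixOrder in
  set S := CFC.sqrt (Aᴴ * A)
  have hS : S.PosSemidef := (CFC.sqrt_nonneg (Aᴴ * A)).posSemidef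
  have hSS : S * S = Aᴴ * A :=
    CFC.sqrt_mul_sqrt_self _ (posSemidef_conjTranspose_mul_self A).nonneg
  have hdet : IsUnit S.det := by
    refine isUnit_iff_ne_zero.mpr fun h => hA ?_
    simpa [h, det_conjTranspose] using (congrArg Matrix.det hSS).symm
  refine ⟨A * S⁻¹, ?_, S, hS, ?_⟩
  · rw [Matrix.mem_unitaryGroup_iff', star_eq_conjTranspose, conjTranspose_mul,
      conjTranspose_nonsing_inv, hS.isHermitian.eq, Matrix.mul_assoc, ← Matrix.mul_assoc Aᴴ,
      ← hSS, Matrix.mul_assoc, mul_nonsing_inv _ hdet, Matrix.mul_one, nonsing_inv_mul _ hdet]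
  · rw [Matrix.mul_assoc, nonsing_inv_mul _ hdet, Matrix.mul_one]

lemma dense_setOf_det_ne_zero (𝕜 : Type*) [NontriviallyNormedField 𝕜] :
    Dense {A : Matrix κ κ 𝕜 | A.det ≠ 0} := by
  classical
  intro A
  have hfin : {ε : 𝕜 | (A + ε • (1 : Matrix κ κ 𝕜)).det = 0}.Finite := by
    refine (-A).charpoly.roots.toFinset.finite_toSet.subset fun ε hε => ?_
    rw [Finset.mem_coe, Multiset.mem_toFinset, Polynomial.mem_roots (charpoly_monic _).ne_zero,
      Polynomial.IsRoot, eval_charpoly, scalar_apply, ← smul_one_eq_diagonal, sub_neg_eq_add,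
      add_comm]
    exact hε
  have hmap : Set.MapsTo (fun ε : 𝕜 => A + ε • (1 : Matrix κ κ 𝕜))
      (Set.univ \ {ε | (A + ε • (1 : Matrix κ κ 𝕜)).det = 0}) {A | A.det ≠ 0} :=
    fun ε hε => hε.2
  simpa using map_mem_closure (by fun_prop) (dense_univ.sdiff_finite hfin 0) hmap

variable {ι : Type*} [Fintype ι] [DecidableEq ι]

/-- Writing `A = U * S` in polar form, the left factor disappears against the invariant
tensor `v`. -/
lemma dotProduct_tensorPow_nonneg {v : (ι → κ) → ℝ}
    (hv : ∀ U ∈ Matrix.orthogonalGroup κ ℝ, tensorPow ι U *ᵥ v = v) (A : Matrix κ κ ℝ) :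
    0 ≤ v ⬝ᵥ tensorPow ι A *ᵥ v := by
  have hclosed : IsClosed {A : Matrix κ κ ℝ | 0 ≤ v ⬝ᵥ tensorPow ι A *ᵥ v} :=
    isClosed_le continuous_const
      (continuous_const.dotProduct (continuous_tensorPow.matrix_mulVec continuous_const))
  refine hclosed.closure_subset_iff.mpr (fun A hA => ?_) (dense_setOf_det_ne_zero ℝ A)
  obtain ⟨U, hU, S, hS, rfl⟩ := exists_unitary_mul_posSemidef hA
  have hUv : tensorPow ι Uᵀ *ᵥ v = v := by
    simpa [star_eq_conjTranspose] using hv _ (Unitary.star_mem hU)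
  rw [Set.mem_ofPred_eq, tensorPow_mul, ← mulVec_mulVec, dotProduct_mulVec, ← mulVec_transpose,
    ← tensorPow_transpose, hUv]
  simpa using (posSemidef_tensorPow hS).dotProduct_mulVec_nonneg v

end Positivity

section FirstFundamentalTheorem

variable {ι κ : Type*} [Fintype ι] [DecidableEq ι] [Fintype κ] [DecidableEq κ]

lemma sum_comp_fst_comp_snd {ι κ κ' R : Type*} [Fintype ι] [DecidableEq ι] [Fintype κ]
    [Fintype κ'] [AddCommMonoid R] (f : (ι → κ) → (ι → κ') → R) :
    ∑ a : ι → κ × κ', f (Prod.fst ∘ a) (Prod.snd ∘ a) = ∑ c, ∑ d, f c d := by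
  rw [← Fintype.sum_prod_type',
    ← (Equiv.arrowProdEquivProdArrow ι (fun _ => κ) fun _ => κ').sum_comp]
  rfl

omit [DecidableEq κ] in
lemma dotProduct_tensorPow_mulVec (A : Matrix κ κ ℝ) (v w : (ι → κ) → ℝ) :
    v ⬝ᵥ tensorPow ι A *ᵥ w =
      ∑ a : ι → κ × κ, v (Prod.fst ∘ a) * w (Prod.snd ∘ a) * ∏ k, A (a k).1 (a k).2 := by
  refine Eq.trans ?_ (sum_comp_fst_comp_snd fun c d => v c * w d * ∏ k, A (c k) (d k)).symm
  simp only [dotProduct, mulVec, tensorPow_apply, Finset.mul_sum]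
  exact Finset.sum_congr rfl fun c _ => Finset.sum_congr rfl fun d _ => by ring

lemma sum_mul_matchingTensor (M : Equiv.Perm ι) (v w : (ι → κ) → ℝ) :
    ∑ a : ι → κ × κ, v (Prod.fst ∘ a) * w (Prod.snd ∘ a) * matchingTensor M a =
      (v ⬝ᵥ matchingTensor M) * (w ⬝ᵥ matchingTensor M) := by
  have hsplit (a : ι → κ × κ) : matchingTensor M a =
      matchingTensor M (Prod.fst ∘ a) * matchingTensor M (Prod.snd ∘ a) := by
    simp only [matchingTensor, ite_zero_mul_ite_zero, one_mul, Function.comp_apply, Prod.ext_iff,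
      forall_and]
  simp_rw [hsplit]
  refine (sum_comp_fst_comp_snd
    fun c d => v c * w d * (matchingTensor M c * matchingTensor M d)).trans ?_
  simp only [dotProduct, Finset.sum_mul_sum]
  exact Finset.sum_congr rfl fun c _ => Finset.sum_congr rfl fun d _ => by ring

lemma sum_mul_gaussCorr_eq_zero {v : (ι → κ) → ℝ} (w : (ι → κ) → ℝ)
    (hv : ∀ M : Equiv.Perm ι, IsMatching M → v ⬝ᵥ matchingTensor M = 0) :
    ∑ a : ι → κ × κ, v (Prod.fst ∘ a) * w (Prod.snd ∘ a) * gaussCorr Finset.univ a = 0 := by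
  refine Submodule.span_induction (p := fun f _ =>
      ∑ a : ι → κ × κ, v (Prod.fst ∘ a) * w (Prod.snd ∘ a) * f a = 0)
    ?_ (by simp) ?_ ?_ (gaussCorr_mem_span (β := κ × κ) (Finset.univ : Finset ι))
  · rintro _ ⟨M, hM, rfl⟩
    rw [sum_mul_matchingTensor, hv M (isMatchingOn_univ.mp hM), zero_mul]
  · intro f g _ _ hf hg
    simp [mul_add, Finset.sum_add_distrib, hf, hg]
  · intro r f _ hf
    simp [mul_left_comm _ r, ← Finset.mul_sum, hf]

/-- The law of a matrix with independent standard Gaussian entries. -/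
def gaussianMatrix (κ : Type*) [Fintype κ] : Measure (κ × κ → ℝ) :=
  Measure.pi fun _ => ProbabilityTheory.gaussianReal 0 1

instance : (gaussianMatrix κ).IsOpenPosMeasure := by
  unfold gaussianMatrix
  infer_instance

omit [DecidableEq κ] in
lemma integrable_dotProduct_tensorPow (v w : (ι → κ) → ℝ) :
    Integrable (fun g => v ⬝ᵥ tensorPow ι (Matrix.of (Function.curry g)) *ᵥ w)
      (gaussianMatrix κ) := by
  simp_rw [dotProduct_tensorPow_mulVec]
  exact integrable_finsetSum _ fun a _ =>
    (integrable_prod_gaussianReal Finset.univ a).const_mul _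

lemma integral_dotProduct_tensorPow (v w : (ι → κ) → ℝ) :
    ∫ g, v ⬝ᵥ tensorPow ι (Matrix.of (Function.curry g)) *ᵥ w ∂gaussianMatrix κ =
      ∑ a : ι → κ × κ, v (Prod.fst ∘ a) * w (Prod.snd ∘ a) * gaussCorr Finset.univ a := by
  simp_rw [dotProduct_tensorPow_mulVec, ← integral_prod_gaussianReal Finset.univ,
    ← integral_const_mul]
  exact integral_finsetSum _ fun a _ => (integrable_prod_gaussianReal Finset.univ a).const_mul _

/-- The Gaussian average of the nonnegative function `A ↦ ⟪v, A^⊗ι v⟫` is a combination of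
pairings of `v` with matchings, so that function vanishes, in particular at `A = 1`. -/
lemma eq_zero_of_dotProduct_matchingTensor_eq_zero {v : (ι → κ) → ℝ}
    (hinv : ∀ U ∈ Matrix.orthogonalGroup κ ℝ, tensorPow ι U *ᵥ v = v)
    (hv : ∀ M : Equiv.Perm ι, IsMatching M → v ⬝ᵥ matchingTensor M = 0) : v = 0 := by
  have hzero : ∫ g, v ⬝ᵥ tensorPow ι (Matrix.of (Function.curry g)) *ᵥ v ∂gaussianMatrix κ = 0 :=
    (integral_dotProduct_tensorPow v v).trans (sum_mul_gaussCorr_eq_zero v hv)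
  have hcurry : Continuous fun g : κ × κ → ℝ => Matrix.of (Function.curry g) :=
    continuous_matrix fun i j => continuous_apply (i, j)
  have hcont : Continuous fun g => v ⬝ᵥ tensorPow ι (Matrix.of (Function.curry g)) *ᵥ v :=
    continuous_const.dotProduct
      ((continuous_tensorPow.comp hcurry).matrix_mulVec continuous_const)
  have hae := (integral_eq_zero_iff_of_nonneg (fun _ => dotProduct_tensorPow_nonneg hinv _)
    (integrable_dotProduct_tensorPow v v)).mp hzero
  have hone : v ⬝ᵥ tensorPow ι 1 *ᵥ v = 0 :=
    congrFun ((hcont.ae_eq_iff_eq _ continuous_zero).mp hae) fun p => (1 : Matrix κ κ ℝ) p.1 p.2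
  rw [tensorPow_one, one_mulVec] at hone
  exact dotProduct_self_eq_zero.mp hone

omit [DecidableEq ι] in
lemma exists_mem_sub_dotProduct_eq_zero (W : Submodule ℝ (ι → ℝ)) (v : ι → ℝ) :
    ∃ w ∈ W, ∀ u ∈ W, (v - w) ⬝ᵥ u = 0 := by
  let L := WithLp.linearEquiv 2 ℝ (ι → ℝ)
  let W' : Submodule ℝ (EuclideanSpace ℝ ι) := W.comap L.toLinearMap
  refine ⟨L (W'.starProjection (WithLp.toLp 2 v)), W'.starProjection_apply_mem _, fun u hu => ?_⟩
  have h := (Submodule.mem_orthogonal _ _).mp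
    (W'.sub_starProjection_mem_orthogonal (WithLp.toLp 2 v)) (WithLp.toLp 2 u) hu
  rwa [EuclideanSpace.inner_eq_star_dotProduct] at h

/-- The **first fundamental theorem** of invariant theory for the orthogonal group. -/
theorem mem_span_matchingTensor {v : (ι → κ) → ℝ}
    (hv : ∀ U ∈ Matrix.orthogonalGroup κ ℝ, tensorPow ι U *ᵥ v = v) :
    v ∈ Submodule.span ℝ {f | ∃ M : Equiv.Perm ι, IsMatching M ∧ f = matchingTensor M} := by
  set W := Submodule.span ℝ
    {f : (ι → κ) → ℝ | ∃ M : Equiv.Perm ι, IsMatching M ∧ f = matchingTensor M} with hW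
  obtain ⟨w, hw, horth⟩ := exists_mem_sub_dotProduct_eq_zero W v
  have hwinv (U) (hU : U ∈ Matrix.orthogonalGroup κ ℝ) : tensorPow ι U *ᵥ w = w := by
    have hle : W ≤ LinearMap.eqLocus (tensorPow ι U).mulVecLin LinearMap.id := by
      rw [hW, Submodule.span_le]
      rintro _ ⟨M, hM, rfl⟩
      exact tensorPow_mulVec_matchingTensor hU hM
    exact hle hw
  have hvw : v - w = 0 := by
    refine eq_zero_of_dotProduct_matchingTensor_eq_zero (fun U hU => ?_) fun M hM => ?_
    · rw [mulVec_sub, hv U hU, hwinv U hU]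
    · exact horth _ (Submodule.subset_span ⟨M, hM, rfl⟩)
  rwa [sub_eq_zero.mp hvw]

end FirstFundamentalTheorem

section SlotPermutations

variable {α β κ : Type*}

/-- The permutation of the slots `α ⊕ β` acting by `τ` on the second summand. -/
def permInr (α : Type*) {β : Type*} : Equiv.Perm β →* Equiv.Perm (α ⊕ β) :=
  (Equiv.Perm.sumCongrHom α β).comp (MonoidHom.inr _ _)

@[simp]
lemma permInr_apply_inl (τ : Equiv.Perm β) (x : α) : permInr α τ (Sum.inl x) = Sum.inl x := rfl

@[simp]
lemma permInr_apply_inr (τ : Equiv.Perm β) (j : β) : permInr α τ (Sum.inr j) = Sum.inr (τ j) := rfl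

lemma permInr_swap [DecidableEq α] [DecidableEq β] (j j' : β) :
    permInr α (Equiv.swap j j') = Equiv.swap (Sum.inr j) (Sum.inr j') :=
  Equiv.Perm.sumCongr_one_swap j j'

lemma sign_permInr [Fintype α] [DecidableEq α] [Fintype β] [DecidableEq β] (τ : Equiv.Perm β) :
    (permInr α τ).sign = τ.sign := by
  simp [permInr, Equiv.Perm.sign_sumCongr]

lemma exists_eq_permInr [Finite α] [Finite β] {σ : Equiv.Perm (α ⊕ β)}
    (h : ∀ x, σ (Sum.inl x) = Sum.inl x) : ∃ τ, σ = permInr α τ := by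
  have hσ : σ ∈ (Equiv.Perm.sumCongrHom α β).range := by
    refine Equiv.Perm.mem_sumCongrHom_range_of_perm_mapsTo_inl ?_
    rintro _ ⟨x, rfl⟩
    exact ⟨x, (h x).symm⟩
  obtain ⟨⟨τ₁, τ⟩, rfl⟩ := hσ
  have hτ₁ : τ₁ = 1 := Equiv.ext fun x => by simpa using h x
  exact ⟨τ, by rw [hτ₁]; rfl⟩

/-- The tensor representation of the orthogonal group on `(ℝ^κ)^⊗ι`. -/
def tensorRep (ι κ : Type*) [Fintype ι] [DecidableEq ι] [Fintype κ] [DecidableEq κ] :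
    Representation ℝ (Matrix.orthogonalGroup κ ℝ) ((ι → κ) → ℝ) where
  toFun U := (tensorPow ι (U : Matrix κ κ ℝ)).mulVecLin
  map_one' := by simp [tensorPow_one, Module.End.one_eq_id]
  map_mul' U V := by simp [tensorPow_mul, mulVecLin_mul, Module.End.mul_eq_comp]

lemma tensorRep_apply {ι : Type*} [Fintype ι] [DecidableEq ι] [Fintype κ] [DecidableEq κ]
    (U : Matrix.orthogonalGroup κ ℝ) (v : (ι → κ) → ℝ) :
    tensorRep ι κ U v = tensorPow ι (U : Matrix κ κ ℝ) *ᵥ v := rfl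

variable [Fintype β] [DecidableEq β]

/-- The representation of `Perm β` on tensors with slots `α ⊕ β` permuting the slots in `β`,
twisted by the sign: its invariants are the tensors antisymmetric in these slots. -/
def signRep (α β κ : Type*) [Fintype β] [DecidableEq β] :
    Representation ℝ (Equiv.Perm β) ((α ⊕ β → κ) → ℝ) where
  toFun τ := τ.sign • LinearMap.funLeft ℝ ℝ fun c => c ∘ permInr α τ
  map_one' := by
    ext
    simp [LinearMap.funLeft_apply]
  map_mul' σ τ := by
    refine LinearMap.ext fun f => funext fun c => ?_
    rw [map_mul, map_mul, mul_smul]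
    rfl

lemma signRep_apply (τ : Equiv.Perm β) (f : (α ⊕ β → κ) → ℝ) (c : α ⊕ β → κ) :
    signRep α β κ τ f c = τ.sign • f (c ∘ permInr α τ) := rfl

instance : Invertible (Fintype.card (Equiv.Perm β) : ℝ) :=
  invertibleOfNonzero (Nat.cast_ne_zero.mpr Fintype.card_ne_zero)

/-- Antisymmetrization of a tensor in the slots indexed by the second summand. -/
def antisymmetrizer (α β κ : Type*) [Fintype β] [DecidableEq β] :
    ((α ⊕ β → κ) → ℝ) →ₗ[ℝ] (α ⊕ β → κ) → ℝ :=
  (signRep α β κ).averageMap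

lemma antisymmetrizer_eq_smul_sum : antisymmetrizer α β κ =
    (Fintype.card (Equiv.Perm β) : ℝ)⁻¹ • ∑ τ, signRep α β κ τ := by
  simp [antisymmetrizer, Representation.averageMap, GroupAlgebra.average]

lemma antisymmetrizer_apply (f : (α ⊕ β → κ) → ℝ) (c : α ⊕ β → κ) :
    antisymmetrizer α β κ f c = (Fintype.card (Equiv.Perm β) : ℝ)⁻¹ *
      ∑ τ : Equiv.Perm β, τ.sign • f (c ∘ permInr α τ) := by
  simp [antisymmetrizer_eq_smul_sum, signRep_apply]

lemma isProj_antisymmetrizer :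
    LinearMap.IsProj (signRep α β κ).invariants (antisymmetrizer α β κ) :=
  (signRep α β κ).isProj_averageMap

lemma antisymmetrizer_signRep (τ : Equiv.Perm β) (f : (α ⊕ β → κ) → ℝ) :
    antisymmetrizer α β κ (signRep α β κ τ f) = antisymmetrizer α β κ f := by
  simp only [antisymmetrizer_eq_smul_sum, LinearMap.smul_apply, LinearMap.sum_apply]
  congr 1
  refine Fintype.sum_equiv (Equiv.mulRight τ) _ _ fun σ => ?_
  rw [Equiv.coe_mulRight, map_mul, Module.End.mul_apply]

variable [Fintype α] [DecidableEq α] [Fintype κ] [DecidableEq κ]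

lemma signRep_tensorRep_comm (τ : Equiv.Perm β) (U : Matrix.orthogonalGroup κ ℝ)
    (v : (α ⊕ β → κ) → ℝ) :
    signRep α β κ τ (tensorRep (α ⊕ β) κ U v) = tensorRep (α ⊕ β) κ U (signRep α β κ τ v) := by
  ext c
  have hv : signRep α β κ τ v = τ.sign • fun d => v (d ∘ permInr α τ) := rfl
  rw [signRep_apply, tensorRep_apply, tensorRep_apply, tensorPow_mulVec_comp, hv, mulVec_smul]
  rfl

lemma antisymmetrizer_tensorRep_comm (U : Matrix.orthogonalGroup κ ℝ) (v : (α ⊕ β → κ) → ℝ) :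
    antisymmetrizer α β κ (tensorRep (α ⊕ β) κ U v) =
      tensorRep (α ⊕ β) κ U (antisymmetrizer α β κ v) := by
  simp [antisymmetrizer_eq_smul_sum, signRep_tensorRep_comm]

/-- The orthogonally invariant tensors which are antisymmetric in the slots of `β`. -/
def altInvariants (α β κ : Type*) [Fintype α] [DecidableEq α] [Fintype β] [DecidableEq β]
    [Fintype κ] [DecidableEq κ] : Submodule ℝ ((α ⊕ β → κ) → ℝ) :=
  (tensorRep (α ⊕ β) κ).invariants ⊓ (signRep α β κ).invariants

end SlotPermutations

section AltMatching

variable {ι α β κ : Type*} [DecidableEq κ]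

lemma matchingTensor_comp [Fintype ι] (M σ : Equiv.Perm ι) (c : ι → κ) :
    matchingTensor M (c ∘ σ) = matchingTensor (σ * M * σ⁻¹) c := by
  refine if_congr ⟨fun h k => ?_, fun h k => ?_⟩ rfl rfl
  · simpa using h (σ⁻¹ k)
  · simpa using h (σ k)

variable [Fintype α] [Fintype β] [DecidableEq β]

/-- The antisymmetrized matching tensor. -/
def altMatching (κ : Type*) [DecidableEq κ] (M : Equiv.Perm (α ⊕ β)) : (α ⊕ β → κ) → ℝ :=
  antisymmetrizer α β κ (matchingTensor M)

lemma altMatching_conj_permInr (M : Equiv.Perm (α ⊕ β)) (τ : Equiv.Perm β) :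
    altMatching κ (permInr α τ * M * (permInr α τ)⁻¹) = τ.sign • altMatching κ M := by
  have h : matchingTensor (permInr α τ * M * (permInr α τ)⁻¹) =
      τ.sign • signRep α β κ τ (matchingTensor M) := by
    ext c
    rw [Pi.smul_apply, signRep_apply, smul_smul, Int.units_mul_self, one_smul, matchingTensor_comp]
  rw [altMatching, altMatching, h, LinearMap.map_smul_of_tower, antisymmetrizer_signRep]

lemma altInvariants_eq_span (α β κ : Type*) [Fintype α] [DecidableEq α] [Fintype β]
    [DecidableEq β] [Fintype κ] [DecidableEq κ] : altInvariants α β κ =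
      Submodule.span ℝ {f | ∃ M : Equiv.Perm (α ⊕ β), IsMatching M ∧ f = altMatching κ M} := by
  refine le_antisymm (fun v hv => ?_) (Submodule.span_le.mpr ?_)
  · have h := Submodule.mem_map_of_mem (f := antisymmetrizer α β κ)
      (mem_span_matchingTensor fun U hU => hv.1 ⟨U, hU⟩)
    rw [isProj_antisymmetrizer.map_id v hv.2, Submodule.map_span] at h
    refine Submodule.span_mono ?_ h
    rintro _ ⟨_, ⟨M, hM, rfl⟩, rfl⟩
    exact ⟨M, hM, rfl⟩
  · rintro _ ⟨M, hM, rfl⟩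
    refine ⟨fun U => ?_, isProj_antisymmetrizer.map_mem _⟩
    rw [altMatching, ← antisymmetrizer_tensorRep_comm, tensorRep_apply,
      tensorPow_mulVec_matchingTensor U.2 hM]

omit [DecidableEq κ] in
/-- Two of the points of `I` have the same colour, and their transposition cancels the terms
in pairs. -/
lemma sum_sign_smul_comp_eq_zero [Fintype ι] [DecidableEq ι] [Fintype κ] {E : Type*}
    [AddCommGroup E] {I : Finset ι} (hI : Fintype.card κ < I.card) (f : (ι → κ) → E) (c : ι → κ) :
    ∑ σ : Equiv.Perm ι with ∀ k ∉ I, σ k = k, σ.sign • f (c ∘ σ) = 0 := by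
  obtain ⟨x, hx, y, hy, hxy, hc⟩ := Finset.exists_ne_map_eq_of_card_lt_of_maps_to
    (s := I) (t := Finset.univ) (by simpa using hI) (f := c) fun _ _ => Finset.mem_univ _
  have hcomp (σ : Equiv.Perm ι) : c ∘ (Equiv.swap x y * σ : Equiv.Perm ι) = c ∘ σ := by
    ext k
    simp only [Function.comp_apply, Equiv.Perm.mul_apply, Equiv.swap_apply_def]
    grind
  refine Finset.sum_involution (fun σ _ => Equiv.swap x y * σ) (fun σ _ => ?_)
    (fun σ _ _ => ?_) (fun σ hσ => ?_) fun σ _ => Equiv.swap_mul_self_mul x y σ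
  · rw [hcomp, Equiv.Perm.sign_mul, Equiv.Perm.sign_swap hxy, neg_one_mul, Units.neg_smul,
      add_neg_cancel]
  · exact fun h => hxy (Equiv.swap_eq_one_iff.mp (mul_eq_right.mp h))
  · simp only [Finset.mem_filter_univ] at hσ ⊢
    intro k hk
    rw [Equiv.Perm.mul_apply, hσ k hk, Equiv.swap_apply_of_ne_of_ne]
    · rintro rfl; exact hk hx
    · rintro rfl; exact hk hy

lemma sum_sign_smul_altMatching_conj_eq_zero [DecidableEq α] [Fintype κ]
    (M : Equiv.Perm (α ⊕ β)) {I : Finset (α ⊕ β)} (hI : Fintype.card κ < I.card) :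
    ∑ σ : Equiv.Perm (α ⊕ β) with ∀ k ∉ I, σ k = k,
      σ.sign • altMatching κ (σ * M * σ⁻¹) = 0 := by
  have h : ∑ σ : Equiv.Perm (α ⊕ β) with ∀ k ∉ I, σ k = k,
      σ.sign • matchingTensor (κ := κ) (σ * M * σ⁻¹) = 0 := by
    ext c
    simp only [Finset.sum_apply, Pi.smul_apply, ← matchingTensor_comp]
    exact sum_sign_smul_comp_eq_zero hI (matchingTensor M) c
  simpa only [altMatching, map_sum, LinearMap.map_smul_of_tower, map_zero] using
    congrArg (antisymmetrizer α β κ) h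

end AltMatching

section ArcMap

variable {α β κ : Type*} {M M' : Equiv.Perm (α ⊕ β)}

/-- The self-map of `α` induced by a matching of `α ⊕ β`: an arc inside `α` exchanges its two
ends, a point matched into `β` is fixed. -/
def arcMap (M : Equiv.Perm (α ⊕ β)) (x : α) : α :=
  Sum.elim id (fun _ => x) (M (Sum.inl x))

/-- A matching of `α ⊕ β` without arcs inside the second summand. -/
structure IsRightIndepMatching (M : Equiv.Perm (α ⊕ β)) : Prop extends IsMatching M where
  apply_inr_ne : ∀ j j', M (Sum.inr j) ≠ Sum.inr j'

lemma IsMatching.conj {ι : Type*} {M : Equiv.Perm ι} (hM : IsMatching M) (σ : Equiv.Perm ι) :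
    IsMatching (σ * M * σ⁻¹) where
  involutive k := by simp [hM.involutive _]
  apply_ne k h := hM.apply_ne (σ⁻¹ k) (by simpa [← Equiv.Perm.eq_inv_iff_eq] using h)

lemma arcMap_of_inl {x y : α} (h : M (Sum.inl x) = Sum.inl y) : arcMap M x = y := by
  simp [arcMap, h]

lemma arcMap_of_inr {x : α} {j : β} (h : M (Sum.inl x) = Sum.inr j) : arcMap M x = x := by
  simp [arcMap, h]

lemma apply_inl_of_arcMap_ne {x : α} (h : arcMap M x ≠ x) :
    M (Sum.inl x) = Sum.inl (arcMap M x) := by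
  rcases h' : M (Sum.inl x) with y | j
  · rw [arcMap_of_inl h']
  · exact absurd (arcMap_of_inr h') h

lemma IsMatching.arcMap_ne_of_apply_inl (hM : IsMatching M) {x y : α}
    (h : M (Sum.inl x) = Sum.inl y) : arcMap M x ≠ x := fun h' =>
  hM.apply_ne (Sum.inl x) (h.trans (congrArg Sum.inl ((arcMap_of_inl h).symm.trans h')))

lemma IsMatching.arcMap_eq_self_iff (hM : IsMatching M) (x : α) :
    arcMap M x = x ↔ ∃ j, M (Sum.inl x) = Sum.inr j := by
  rcases h : M (Sum.inl x) with y | j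
  · simp [hM.arcMap_ne_of_apply_inl h]
  · simp [arcMap_of_inr h]

lemma IsMatching.involutive_arcMap (hM : IsMatching M) : Function.Involutive (arcMap M) := by
  intro x
  rcases h : M (Sum.inl x) with y | j
  · rw [arcMap_of_inl h, arcMap_of_inl (y := x) (by rw [← h, hM.involutive])]
  · rw [arcMap_of_inr h, arcMap_of_inr h]

lemma IsRightIndepMatching.exists_inl (hM : IsRightIndepMatching M) (j : β) :
    ∃ x, M (Sum.inr j) = Sum.inl x := by
  rcases h : M (Sum.inr j) with x | j'
  · exact ⟨x, rfl⟩
  · exact absurd h (hM.apply_inr_ne _ _)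

lemma exists_conj_of_arcMap_eq [Finite β] (hM : IsRightIndepMatching M)
    (hM' : IsRightIndepMatching M') (h : arcMap M = arcMap M') :
    ∃ τ : Equiv.Perm β, M' = permInr α τ * M * (permInr α τ)⁻¹ := by
  have hinr (j : β) : ∃ j', M' (M (Sum.inr j)) = Sum.inr j' := by
    obtain ⟨x, hx⟩ := hM.exists_inl j
    rw [hx, ← hM'.arcMap_eq_self_iff, ← h, hM.arcMap_eq_self_iff]
    exact ⟨j, by rw [← hx, hM.involutive]⟩
  choose t ht using hinr
  have hinj : Function.Injective t := fun a b hab => by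
    simpa using (ht a).trans ((congrArg Sum.inr hab).trans (ht b).symm)
  refine ⟨Equiv.ofBijective t (Finite.injective_iff_bijective.mp hinj),
    eq_mul_inv_of_mul_eq (Equiv.ext ?_)⟩
  rintro (x | j)
  · rw [Equiv.Perm.mul_apply, Equiv.Perm.mul_apply, permInr_apply_inl]
    by_cases hx : arcMap M x = x
    · obtain ⟨j, hj⟩ := (hM.arcMap_eq_self_iff x).mp hx
      rw [hj, ← hM.involutive (Sum.inl x), hj, ht]
      rfl
    · rw [apply_inl_of_arcMap_ne hx, apply_inl_of_arcMap_ne (h ▸ hx), h, permInr_apply_inl]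
  · obtain ⟨x, hx⟩ := hM.exists_inl j
    rw [Equiv.Perm.mul_apply, Equiv.Perm.mul_apply, permInr_apply_inr, Equiv.ofBijective_apply,
      ← ht, hM'.involutive, hx, permInr_apply_inl]

variable [Fintype α] [Fintype β] [DecidableEq β] [DecidableEq κ]

lemma altMatching_mem_span_singleton (hM : IsRightIndepMatching M)
    (hM' : IsRightIndepMatching M') (h : arcMap M = arcMap M') :
    altMatching κ M' ∈ Submodule.span ℝ {altMatching κ M} := by
  obtain ⟨τ, rfl⟩ := exists_conj_of_arcMap_eq hM hM' h
  rw [altMatching_conj_permInr]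
  exact Submodule.smul_of_tower_mem _ _ (Submodule.mem_span_singleton_self _)

lemma altMatching_eq_zero (hM : IsMatching M) {j j' : β}
    (h : M (Sum.inr j) = Sum.inr j') : altMatching κ M = 0 := by
  classical
  have hne : j ≠ j' := fun hj => hM.apply_ne (Sum.inr j) (by rw [h, hj])
  have h' : M (Sum.inr j') = Sum.inr j := by rw [← h, hM.involutive]
  have hconj : permInr α (Equiv.swap j j') * M * (permInr α (Equiv.swap j j'))⁻¹ = M := by
    rw [permInr_swap, Equiv.swap_inv, mul_assoc, Equiv.mul_swap_eq_swap_mul, h, h',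
      Equiv.swap_comm (Sum.inr j'), Equiv.swap_mul_self_mul]
  have hneg := altMatching_conj_permInr (κ := κ) M (Equiv.swap j j')
  rw [hconj, Equiv.Perm.sign_swap hne, Units.neg_smul, one_smul] at hneg
  exact self_eq_neg.mp hneg

end ArcMap

section Straightening

lemma exists_perm_apply_eq {ι X : Type*} {f : ι → X} (hf : Function.Injective f)
    {σ : Equiv.Perm X} (hσ : ∀ x ∉ Set.range f, σ x = x) :
    ∃ s : Equiv.Perm ι, ∀ a, σ (f a) = f (s a) := by
  have hrange (x : X) : σ x ∈ Set.range f ↔ x ∈ Set.range f := by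
    refine ⟨fun h => ?_, fun h => ?_⟩ <;> by_contra hx
    · rw [hσ x hx] at h
      exact hx h
    · rw [σ.injective (hσ _ hx)] at hx
      exact hx h
  let e := Equiv.ofInjective f hf
  refine ⟨e.trans ((σ.subtypePerm hrange).trans e.symm), fun a => ?_⟩
  simp [e, Equiv.apply_ofInjective_symm hf]

lemma toLex_le_of_forall {ι γ : Type*} [LinearOrder ι] [WellFoundedLT ι] [LinearOrder γ]
    {f g : ι → γ} (h : ∀ x, (∀ y < x, f y = g y) → f x ≤ g x) : toLex f ≤ toLex g := by
  by_contra! hlt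
  obtain ⟨x, heq, hx⟩ := hlt
  exact (h x fun y hy => (heq y hy).symm).not_gt hx

variable {α β κ : Type*} [LinearOrder α] {k : ℕ} {M : Equiv.Perm (α ⊕ β)} {i p : Fin k → α}

/-- An increasing chain of arcs of a matching: `i a` is joined to `p a` by an arc, or to a point
of `β` when `i a = p a`, and both ends increase with `a`. -/
structure IsArcChain (M : Equiv.Perm (α ⊕ β)) (i p : Fin k → α) : Prop where
  strictMono_left : StrictMono i
  strictMono_right : StrictMono p
  left_le_right : ∀ a, i a ≤ p a
  arcMap_left : ∀ a, arcMap M (i a) = p a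

lemma IsMatching.isArcChain (hM : IsMatching M) {f : Fin k → α} (hf : StrictMono f)
    (hf' : StrictMono fun a => arcMap M (f a)) :
    IsArcChain M (fun a => min (f a) (arcMap M (f a))) fun a => max (f a) (arcMap M (f a)) where
  strictMono_left _ _ h := min_lt_min (hf h) (hf' h)
  strictMono_right _ _ h := max_lt_max (hf h) (hf' h)
  left_le_right _ := min_le_max
  arcMap_left a := by
    rcases le_total (f a) (arcMap M (f a)) with h | h <;> simp [h, hM.involutive_arcMap _]

lemma IsArcChain.arcMap_right (h : IsArcChain M i p) (hM : IsMatching M) (a : Fin k) :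
    arcMap M (p a) = i a := by
  rw [← h.arcMap_left, hM.involutive_arcMap]

lemma IsArcChain.left_lt_right (h : IsArcChain M i p) (hM : IsMatching M) {a : Fin k} {y : α}
    (hy : M (Sum.inl (p a)) = Sum.inl y) : i a < p a :=
  (h.left_le_right a).lt_of_ne fun hip =>
    hM.arcMap_ne_of_apply_inl hy ((h.arcMap_right hM a).trans hip)

lemma IsArcChain.injective_legs (h : IsArcChain M i p) :
    Function.Injective fun a => M (Sum.inl (p a)) :=
  M.injective.comp (Sum.inl_injective.comp h.strictMono_right.injective)

variable [DecidableEq β]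

/-- The partners under `M` of the right ends of an arc chain; permuting them moves the arcs. -/
def chainLegs (M : Equiv.Perm (α ⊕ β)) (p : Fin k → α) : Finset (α ⊕ β) :=
  Finset.univ.image fun a => M (Sum.inl (p a))

lemma mem_chainLegs {x : α ⊕ β} : x ∈ chainLegs M p ↔ ∃ a, M (Sum.inl (p a)) = x := by
  simp [chainLegs]

lemma IsArcChain.card_chainLegs (h : IsArcChain M i p) : (chainLegs M p).card = k := by
  rw [chainLegs, Finset.card_image_of_injective _ h.injective_legs, Finset.card_fin]

lemma IsArcChain.right_notMem_chainLegs (h : IsArcChain M i p) (hM : IsMatching M) (a : Fin k) :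
    Sum.inl (p a) ∉ chainLegs M p := by
  intro ha
  obtain ⟨b, hb⟩ := mem_chainLegs.mp ha
  have hib : i b = p a := (h.arcMap_right hM b).symm.trans (arcMap_of_inl hb)
  have hia : i a = p b := by rw [← h.arcMap_right hM a, ← hib, h.arcMap_left]
  have hlt := h.left_lt_right hM hb
  exact (h.left_le_right a).not_gt (hia ▸ hib ▸ hlt)

variable {σ : Equiv.Perm (α ⊕ β)}

lemma IsArcChain.conj_apply_right (h : IsArcChain M i p) (hM : IsMatching M)
    (hσ : ∀ x ∉ chainLegs M p, σ x = x) (a : Fin k) :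
    (σ * M * σ⁻¹) (Sum.inl (p a)) = σ (M (Sum.inl (p a))) := by
  rw [Equiv.Perm.mul_apply, Equiv.Perm.mul_apply,
    Equiv.Perm.inv_eq_iff_eq.mpr (hσ _ (h.right_notMem_chainLegs hM a)).symm]

lemma IsArcChain.exists_conj_apply_right (h : IsArcChain M i p) (hM : IsMatching M)
    (hσ : ∀ x ∉ chainLegs M p, σ x = x) :
    ∃ s : Equiv.Perm (Fin k), ∀ a, (σ * M * σ⁻¹) (Sum.inl (p a)) = M (Sum.inl (p (s a))) := by
  obtain ⟨s, hs⟩ := exists_perm_apply_eq h.injective_legs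
    fun x hx => hσ x fun hx' => hx (mem_chainLegs.mp hx')
  exact ⟨s, fun a => (h.conj_apply_right hM hσ a).trans (hs a)⟩

lemma arcMap_conj_of_notMem (hσ : ∀ x ∉ chainLegs M p, σ x = x) {x : α}
    (hx : Sum.inl x ∉ chainLegs M p) (hxp : ∀ a, x ≠ p a) :
    arcMap (σ * M * σ⁻¹) x = arcMap M x := by
  have hMx : M (Sum.inl x) ∉ chainLegs M p := fun hmem => by
    obtain ⟨a, ha⟩ := mem_chainLegs.mp hmem
    exact hxp a (Sum.inl_injective (M.injective ha)).symm
  rw [arcMap, arcMap, Equiv.Perm.mul_apply, Equiv.Perm.mul_apply,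
    Equiv.Perm.inv_eq_iff_eq.mpr (hσ _ hx).symm, hσ _ hMx]

lemma IsArcChain.arcMap_le_arcMap_conj_left (h : IsArcChain M i p) (hM : IsMatching M)
    (hσ : ∀ x ∉ chainLegs M p, σ x = x) {a : Fin k} (ha : M (Sum.inl (p a)) = Sum.inl (i a))
    (hlt : ∀ y < i a, arcMap M y = arcMap (σ * M * σ⁻¹) y) :
    arcMap M (i a) ≤ arcMap (σ * M * σ⁻¹) (i a) := by
  obtain ⟨s, hs⟩ := h.exists_conj_apply_right hM hσ
  obtain ⟨b, rfl⟩ := s.surjective a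
  have hb : arcMap (σ * M * σ⁻¹) (p b) = i (s b) := arcMap_of_inl ((hs b).trans ha)
  rw [← hb, (hM.conj σ).involutive_arcMap, hb, h.arcMap_left]
  refine h.strictMono_right.monotone (not_lt.mp fun hba => ?_)
  have hbi := hlt _ (h.strictMono_left hba)
  rw [h.arcMap_left, ← (hM.conj σ).involutive_arcMap (p b), hb] at hbi
  exact hba.ne (h.strictMono_left.injective ((hM.conj σ).involutive_arcMap.injective hbi).symm)

lemma IsArcChain.arcMap_le_arcMap_conj_right (h : IsArcChain M i p) (hM : IsMatching M)
    (hσ : ∀ x ∉ chainLegs M p, σ x = x) {a : Fin k}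
    (hlt : ∀ y < p a, arcMap M y = arcMap (σ * M * σ⁻¹) y) :
    arcMap M (p a) ≤ arcMap (σ * M * σ⁻¹) (p a) := by
  have hinv := (hM.conj σ).involutive_arcMap
  have hleft {b : Fin k} (hb : i b < p a) : arcMap (σ * M * σ⁻¹) (p b) = i b := by
    rw [← h.arcMap_left b, hlt _ hb, hinv]
  rcases (h.left_le_right a).lt_or_eq with ha | ha
  · rw [hleft ha, h.arcMap_right hM]
  · by_contra! hmoved
    rw [h.arcMap_right hM, ha] at hmoved
    obtain ⟨s, hs⟩ := h.exists_conj_apply_right hM hσ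
    have hsa := (hs a).symm.trans (apply_inl_of_arcMap_ne hmoved.ne)
    have his := (h.arcMap_right hM (s a)).symm.trans (arcMap_of_inl hsa)
    have hfix : p (s a) = p a := hinv.injective ((hleft (his ▸ hmoved)).trans his)
    have hsa' := h.left_lt_right hM hsa
    rw [h.strictMono_right.injective hfix] at hsa'
    exact hsa'.ne ha

lemma IsArcChain.toLex_arcMap_le_conj [WellFoundedLT α] (h : IsArcChain M i p)
    (hM : IsMatching M) (hσ : ∀ x ∉ chainLegs M p, σ x = x) :
    toLex (arcMap M) ≤ toLex (arcMap (σ * M * σ⁻¹)) := by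
  refine toLex_le_of_forall fun x hlt => ?_
  by_cases hx : Sum.inl x ∈ chainLegs M p
  · obtain ⟨a, ha⟩ := mem_chainLegs.mp hx
    obtain rfl : x = i a := (arcMap_of_inl ha).symm.trans (h.arcMap_right hM a)
    exact h.arcMap_le_arcMap_conj_left hM hσ ha hlt
  · by_cases hxp : ∃ a, x = p a
    · obtain ⟨a, rfl⟩ := hxp
      exact h.arcMap_le_arcMap_conj_right hM hσ hlt
    · exact (arcMap_conj_of_notMem hσ hx (not_exists.mp hxp)).ge

lemma IsArcChain.apply_inl_of_arcMap_conj_eq (h : IsArcChain M i p) (hM : IsMatching M)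
    (hσ : ∀ x ∉ chainLegs M p, σ x = x) (he : arcMap (σ * M * σ⁻¹) = arcMap M) (x : α) :
    σ (Sum.inl x) = Sum.inl x := by
  by_cases hx : Sum.inl x ∈ chainLegs M p
  · obtain ⟨a, ha⟩ := mem_chainLegs.mp hx
    have hpa : arcMap (σ * M * σ⁻¹) (p a) = x := by rw [he, arcMap_of_inl ha]
    have hne : x ≠ p a := arcMap_of_inl ha ▸ hM.arcMap_ne_of_apply_inl ha
    rw [← ha, ← h.conj_apply_right hM hσ, apply_inl_of_arcMap_ne (hpa.trans_ne hne), hpa, ha]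
  · exact hσ _ hx

variable [Fintype α] [Fintype β] [DecidableEq κ]

lemma IsArcChain.altMatching_conj (h : IsArcChain M i p) (hM : IsMatching M)
    (hσ : ∀ x ∉ chainLegs M p, σ x = x) (he : arcMap (σ * M * σ⁻¹) = arcMap M) :
    altMatching κ (σ * M * σ⁻¹) = σ.sign • altMatching κ M := by
  obtain ⟨τ, rfl⟩ := exists_eq_permInr (h.apply_inl_of_arcMap_conj_eq hM hσ he)
  rw [altMatching_conj_permInr, sign_permInr]

/-- Summing over the permutations of the legs kills the antisymmetrized tensors; the terms with
the same arc map are multiples of `altMatching κ M`, the others have a larger arc map. -/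
lemma IsArcChain.altMatching_mem_span [Fintype κ] (h : IsArcChain M i p) (hM : IsMatching M)
    (hk : Fintype.card κ < k) : altMatching κ M ∈ Submodule.span ℝ {v |
      ∃ M' : Equiv.Perm (α ⊕ β), IsMatching M' ∧ toLex (arcMap M) < toLex (arcMap M') ∧
        v = altMatching κ M'} := by
  have hsum := sum_sign_smul_altMatching_conj_eq_zero (κ := κ) M (hk.trans_eq h.card_chainLegs.symm)
  set S := Finset.univ.filter fun σ : Equiv.Perm (α ⊕ β) => ∀ x ∉ chainLegs M p, σ x = x
  have hS {σ} (hσ : σ ∈ S) : ∀ x ∉ chainLegs M p, σ x = x := (Finset.mem_filter.mp hσ).2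
  set E := S.filter fun σ => arcMap (σ * M * σ⁻¹) = arcMap M
  have hsame : ∑ σ ∈ E, σ.sign • altMatching κ (σ * M * σ⁻¹) = (E.card : ℝ) • altMatching κ M := by
    rw [Nat.cast_smul_eq_nsmul, ← Finset.sum_const]
    refine Finset.sum_congr rfl fun σ hσ => ?_
    obtain ⟨hσS, hσE⟩ := Finset.mem_filter.mp hσ
    rw [h.altMatching_conj hM (hS hσS) hσE, smul_smul, Int.units_mul_self, one_smul]
  have hcard : (E.card : ℝ) ≠ 0 := Nat.cast_ne_zero.mpr
    (Finset.card_ne_zero_of_mem (a := 1) (by simp [E, S]))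
  rw [← Submodule.smul_mem_iff _ hcard, ← hsame, eq_neg_of_add_eq_zero_left
    ((Finset.sum_filter_add_sum_filter_not S _ _).trans hsum)]
  refine Submodule.neg_mem _ (Submodule.sum_mem _ fun σ hσ =>
    Submodule.smul_of_tower_mem _ _ (Submodule.subset_span ⟨_, hM.conj σ, ?_, rfl⟩))
  obtain ⟨hσS, hσE⟩ := Finset.mem_filter.mp hσ
  exact (h.toLex_arcMap_le_conj hM (hS hσS)).lt_of_ne fun heq => hσE (toLex_inj.mp heq).symm

/-- The longest increasing subsequence of `g` has length at most `l`; on permutations of `Fin n`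
this is `lisLE`. -/
def IncSubseqLE {α γ : Type*} [Preorder α] [Preorder γ] (g : α → γ) (l : ℕ) : Prop :=
  ∀ (k : ℕ) (f : Fin k → α), StrictMono f → StrictMono (fun a => g (f a)) → k ≤ l

theorem IsMatching.altMatching_mem_span [Fintype κ] (hM : IsMatching M) :
    altMatching κ M ∈ Submodule.span ℝ {v | ∃ M' : Equiv.Perm (α ⊕ β),
      IsRightIndepMatching M' ∧ IncSubseqLE (arcMap M') (Fintype.card κ) ∧
        v = altMatching κ M'} := by
  induction h : toLex (arcMap M) using WellFoundedGT.induction generalizing M with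
  | ind x ih =>
    subst h
    by_cases hβ : ∃ j j', M (Sum.inr j) = Sum.inr j'
    · obtain ⟨j, j', h⟩ := hβ
      rw [altMatching_eq_zero hM h]
      exact Submodule.zero_mem _
    by_cases hinc : IncSubseqLE (arcMap M) (Fintype.card κ)
    · push Not at hβ
      exact Submodule.subset_span ⟨M, ⟨hM, hβ⟩, hinc, rfl⟩
    · simp only [IncSubseqLE, not_forall, not_le] at hinc
      obtain ⟨k, f, hf, hf', hk⟩ := hinc
      refine Submodule.span_le.mpr ?_ ((hM.isArcChain hf hf').altMatching_mem_span hM hk)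
      rintro _ ⟨M', hM', hlt, rfl⟩
      exact ih _ hlt hM' rfl

end Straightening

section Colouring

/-- The points `(x, g x)` of the graph of a self-map, ordered as a subset of the product. -/
abbrev GraphPoint {α : Type*} (g : α → α) : Type _ := {q : α × α // q.2 = g q.1}

/-- For an involution, exchanging the coordinates is an automorphism of the graph. -/
def graphSwap {α : Type*} [Preorder α] {g : α → α} (hg : Function.Involutive g) :
    GraphPoint g ≃o GraphPoint g where
  toFun q := ⟨q.1.swap, by rw [Prod.fst_swap, q.2, hg, Prod.snd_swap]⟩
  invFun q := ⟨q.1.swap, by rw [Prod.fst_swap, q.2, hg, Prod.snd_swap]⟩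
  map_rel_iff' := Prod.swap_le_swap

lemma graphPoint_lt_iff {α : Type*} [PartialOrder α] {g : α → α} (hg : Function.Injective g)
    {q q' : GraphPoint g} : q < q' ↔ q.1.1 < q'.1.1 ∧ q.1.2 < q'.1.2 := by
  refine ⟨fun h => ?_, fun h => Prod.mk_lt_mk_of_lt_of_le h.1 h.2.le⟩
  have hne : q.1.1 ≠ q'.1.1 := fun he => h.ne (Subtype.ext (Prod.ext he (by rw [q.2, q'.2, he])))
  refine ⟨h.le.1.lt_of_ne hne, h.le.2.lt_of_ne fun he => hne ?_⟩
  rwa [q.2, q'.2, hg.eq_iff] at he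

lemma IncSubseqLE.height_lt {α : Type*} [PartialOrder α] {g : α → α} {l : ℕ}
    (h : IncSubseqLE g l) (hg : Function.Injective g) (q : GraphPoint g) :
    Order.height q < l := by
  by_contra! hle
  obtain ⟨p, -, hp⟩ := Order.exists_series_of_le_height q hle
  have hlt {a b} (hab : a < b) := (graphPoint_lt_iff hg).mp (p.strictMono hab)
  have hlen : p.length + 1 ≤ l := h _ (fun a => (p a).1.1) (fun a b hab => (hlt hab).1)
    fun a b hab => by simpa only [← (p _).2] using (hlt hab).2
  lia

/-- Colour `x` by the length of the longest increasing subsequence of `g` ending at `x`, that is,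
by the height of `(x, g x)` in the graph of `g`. -/
lemma IncSubseqLE.exists_colouring {α κ : Type*} [LinearOrder α] [Fintype κ] {g : α → α}
    (h : IncSubseqLE g (Fintype.card κ)) (hg : Function.Involutive g) :
    ∃ c : α → κ, (∀ x, c (g x) = c x) ∧ ∀ x y, x < y → c x = c y → g y < g x := by
  have hheight (q : GraphPoint g) : ∃ r : Fin (Fintype.card κ), (r : ℕ∞) = Order.height q := by
    have hq := h.height_lt hg.injective q
    obtain ⟨r, hr⟩ := ENat.ne_top_iff_exists.mp hq.ne_top
    exact ⟨⟨r, by rwa [← hr, Nat.cast_lt] at hq⟩, hr⟩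
  choose r hr using hheight
  have hr_eq {q q'} : r q = r q' ↔ Order.height q = Order.height q' := by
    rw [← hr, ← hr, Nat.cast_inj, Fin.ext_iff]
  refine ⟨fun x => (Fintype.equivFin κ).symm (r ⟨(x, g x), rfl⟩), fun x => ?_,
    fun x y hxy hc => ?_⟩
  · have hswap : graphSwap hg ⟨(x, g x), rfl⟩ = ⟨(g x, g (g x)), rfl⟩ :=
      Subtype.ext (Prod.ext rfl (hg x).symm)
    rw [EmbeddingLike.apply_eq_iff_eq, hr_eq, ← hswap, Order.height_orderIso]
  · rw [EmbeddingLike.apply_eq_iff_eq, hr_eq] at hc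
    by_contra! hle
    have hlt := (graphPoint_lt_iff hg.injective (q := ⟨(x, g x), rfl⟩) (q' := ⟨(y, g y), rfl⟩)).mpr
      ⟨hxy, hle.lt_of_ne (hg.injective.ne hxy.ne)⟩
    have hsucc := Order.height_add_one_le hlt
    rw [← hc, ← hr] at hsucc
    exact (Nat.lt_succ_self _).not_ge (mod_cast hsucc)

lemma toLex_le_of_colouring {α κ : Type*} [LinearOrder α] [WellFoundedLT α] {f g : α → α}
    (hf : Function.Injective f) (hg : Function.Involutive g) {c : α → κ}
    (hcf : ∀ x, c (f x) = c x) (hcg : ∀ x, c (g x) = c x)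
    (hanti : ∀ x y, x < y → c x = c y → g y < g x) : toLex f ≤ toLex g := by
  refine toLex_le_of_forall fun x heq => not_lt.mp fun hlt => ?_
  have hgf : g (f x) < x := by simpa only [hg x] using hanti _ _ hlt (by rw [hcf, hcg])
  have hfgf : f (g (f x)) = f x := by rw [heq _ hgf, hg]
  exact hgf.ne (hf hfgf)

end Colouring

section LinearIndependent

lemma linearIndependent_of_triangular {ι R V L : Type*} [Ring R] [NoZeroDivisors R]
    [AddCommGroup V] [Module R V] [LinearOrder L] [WellFoundedLT L] {v : ι → V}
    (φ : ι → V →ₗ[R] R) (r : ι → L) (hv : ∀ i, φ i (v i) ≠ 0)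
    (hlt : ∀ i j, φ i (v j) ≠ 0 → j ≠ i → r j < r i) : LinearIndependent R v := by
  rw [linearIndependent_iff']
  intro s a ha i
  induction h : r i using WellFoundedLT.induction generalizing i with
  | ind x ih =>
    subst h
    intro hi
    have hφ := congrArg (φ i) ha
    rw [map_sum, map_zero, Finset.sum_eq_single_of_mem i hi fun j hj hji => ?_] at hφ
    · simpa [hv i] using hφ
    · by_cases hij : φ i (v j) = 0
      · simp [hij]
      · simp [ih _ (hlt i j hij hji) j rfl hj]

end LinearIndependent

section Basis

variable {α β κ : Type*} {M : Equiv.Perm (α ⊕ β)}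

lemma IsRightIndepMatching.exists_colouring [LinearOrder α] [Fintype κ]
    (hM : IsRightIndepMatching M) (h : IncSubseqLE (arcMap M) (Fintype.card κ)) :
    ∃ C : α ⊕ β → κ, (∀ k, C (M k) = C k) ∧
      ∀ x y, x < y → C (Sum.inl x) = C (Sum.inl y) → arcMap M y < arcMap M x := by
  obtain ⟨c, hc, hanti⟩ := h.exists_colouring hM.involutive_arcMap
  choose e he using hM.exists_inl
  refine ⟨Sum.elim c (c ∘ e), ?_, hanti⟩
  rintro (x | j)
  · rcases hx : M (Sum.inl x) with y | j
    · simp [← hc x, arcMap_of_inl hx]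
    · have hex : e j = x := Sum.inl_injective (β := β) (by rw [← he, ← hx, hM.involutive])
      simp [hex]
  · simp [he]

lemma IsRightIndepMatching.injective_comp_inr [LinearOrder α] (hM : IsRightIndepMatching M)
    {C : α ⊕ β → κ} (hC : ∀ k, C (M k) = C k)
    (hanti : ∀ x y, x < y → C (Sum.inl x) = C (Sum.inl y) → arcMap M y < arcMap M x) :
    Function.Injective (C ∘ Sum.inr) := by
  have hfix {x y : α} (hx : arcMap M x = x) (hy : arcMap M y = y)
      (hxy : C (Sum.inl x) = C (Sum.inl y)) : ¬ x < y := fun hlt =>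
    (hanti x y hlt hxy).not_gt (by rwa [hx, hy])
  intro j j' hj
  obtain ⟨x, hx⟩ := hM.exists_inl j
  obtain ⟨y, hy⟩ := hM.exists_inl j'
  have hCxy : C (Sum.inl x) = C (Sum.inl y) := by rw [← hx, ← hy, hC, hC]; exact hj
  have hx' := arcMap_of_inr ((congrArg M hx.symm).trans (hM.involutive _))
  have hy' := arcMap_of_inr ((congrArg M hy.symm).trans (hM.involutive _))
  obtain rfl : x = y :=
    le_antisymm (not_lt.mp (hfix hy' hx' hCxy.symm)) (not_lt.mp (hfix hx' hy' hCxy))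
  exact Sum.inr_injective (M.injective (hx.trans hy.symm))

variable [Fintype α] [Fintype β] [DecidableEq β] [DecidableEq κ]

lemma IsRightIndepMatching.altMatching_apply_ne_zero (hM : IsRightIndepMatching M)
    {C : α ⊕ β → κ} (hC : ∀ k, C (M k) = C k) (hinj : Function.Injective (C ∘ Sum.inr)) :
    altMatching κ M C ≠ 0 := by
  rw [altMatching, antisymmetrizer_apply, Fintype.sum_eq_single 1 fun τ hτ => ?_]
  · have hone : permInr α (1 : Equiv.Perm β) = 1 := map_one _
    simp [matchingTensor, hone, hC]
  · rw [matchingTensor, if_neg, smul_zero]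
    refine fun h => hτ (Equiv.ext fun j => ?_)
    obtain ⟨x, hx⟩ := hM.exists_inl j
    have hj := h (Sum.inr j)
    have hCj := hC (Sum.inr j)
    rw [hx] at hj hCj
    exact hinj (hj.symm.trans hCj)

lemma apply_inl_arcMap_of_altMatching_ne_zero {C : α ⊕ β → κ} (h : altMatching κ M C ≠ 0)
    (x : α) : C (Sum.inl (arcMap M x)) = C (Sum.inl x) := by
  rw [altMatching, antisymmetrizer_apply] at h
  obtain ⟨τ, -, hτ⟩ := Finset.exists_ne_zero_of_sum_ne_zero (right_ne_zero_of_mul h)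
  have hC : ∀ k, (C ∘ permInr α τ) (M k) = (C ∘ permInr α τ) k := by
    by_contra hC
    exact hτ (by rw [matchingTensor, if_neg hC, smul_zero])
  rcases hx : M (Sum.inl x) with y | j
  · have hCx := hC (Sum.inl x)
    rw [hx] at hCx
    rw [arcMap_of_inl hx]
    exact hCx
  · rw [arcMap_of_inr hx]

lemma linearIndependent_altMatching [LinearOrder α] [Fintype κ] {ι : Type*}
    {M : ι → Equiv.Perm (α ⊕ β)} (hM : ∀ i, IsRightIndepMatching (M i))
    (hinc : ∀ i, IncSubseqLE (arcMap (M i)) (Fintype.card κ))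
    (hinj : Function.Injective fun i => arcMap (M i)) :
    LinearIndependent ℝ fun i => altMatching κ (M i) := by
  choose C hC hanti using fun i => (hM i).exists_colouring (hinc i)
  have harc (i : ι) (x : α) : C i (Sum.inl (arcMap (M i) x)) = C i (Sum.inl x) := by
    refine apply_inl_arcMap_of_altMatching_ne_zero (κ := κ) ?_ x
    exact (hM i).altMatching_apply_ne_zero (hC i) ((hM i).injective_comp_inr (hC i) (hanti i))
  refine linearIndependent_of_triangular (fun i => LinearMap.proj (C i))
    (fun i => toLex (arcMap (M i)))
    (fun i => (hM i).altMatching_apply_ne_zero (hC i)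
      ((hM i).injective_comp_inr (hC i) (hanti i))) fun i j hij hji => ?_
  refine (toLex_le_of_colouring (hM j).involutive_arcMap.injective (hM i).involutive_arcMap
    (apply_inl_arcMap_of_altMatching_ne_zero hij) (harc i) (hanti i)).lt_of_ne fun he => ?_
  exact hji (hinj (toLex_inj.mp he))

end Basis

section Count

variable {α β κ : Type*}

lemma exists_arcMap_eq {g : α → α} (hg : Function.Involutive g)
    (e : Function.fixedPoints g ≃ β) :
    ∃ M : Equiv.Perm (α ⊕ β), IsRightIndepMatching M ∧ arcMap M = g := by
  classical
  let F : α ⊕ β → α ⊕ β := Sum.elim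
    (fun x => if h : g x = x then Sum.inr (e ⟨x, h⟩) else Sum.inl (g x))
    (fun j => Sum.inl (e.symm j))
  have hfix (j : β) : g (e.symm j) = e.symm j := (e.symm j).2
  have hF : Function.Involutive F := by
    rintro (x | j)
    · by_cases h : g x = x
      · simp [F, h]
      · simp [F, h, hg x, Ne.symm h]
    · exact (dif_pos (hfix j)).trans (congrArg Sum.inr (e.apply_symm_apply j))
  refine ⟨hF.toPerm, ⟨⟨hF, ?_⟩, fun j j' => ?_⟩, funext fun x => ?_⟩
  · rintro (x | j)
    · by_cases h : g x = x <;> simp [F, h]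
    · simp [F]
  · simp [F]
  · by_cases h : g x = x <;> simp [F, h, arcMap]

lemma IsRightIndepMatching.card_fixedPoints_arcMap {M : Equiv.Perm (α ⊕ β)}
    (hM : IsRightIndepMatching M) : Nat.card (Function.fixedPoints (arcMap M)) = Nat.card β := by
  choose e he using hM.exists_inl
  have hMe (j : β) : M (Sum.inl (e j)) = Sum.inr j := by rw [← he, hM.involutive]
  refine (Nat.card_eq_of_bijective (fun j => ⟨e j, arcMap_of_inr (hMe j)⟩)
    ⟨fun a b hab => ?_, ?_⟩).symm
  · have heab : e a = e b := congrArg Subtype.val hab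
    exact Sum.inr_injective (by rw [← hMe, ← hMe, heab])
  · rintro ⟨x, hx⟩
    obtain ⟨j, hj⟩ := (hM.arcMap_eq_self_iff x).mp hx
    exact ⟨j, Subtype.ext (Sum.inl_injective (β := β) (by rw [← he, ← hj, hM.involutive]))⟩

/-- The involutions of `α` with `m` fixed points and no increasing subsequence longer than `l`,
as functions. -/
def boundedInvolutions (α : Type*) [Preorder α] (m l : ℕ) : Set (α → α) :=
  {g | Function.Involutive g ∧ Nat.card (Function.fixedPoints g) = m ∧ IncSubseqLE g l}

lemma mem_boundedInvolutions_iff_exists_arcMap_eq [Preorder α] [Finite α] [Finite β] {l : ℕ}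
    {g : α → α} : g ∈ boundedInvolutions α (Nat.card β) l ↔
      ∃ M : Equiv.Perm (α ⊕ β), (IsRightIndepMatching M ∧ IncSubseqLE (arcMap M) l) ∧
        arcMap M = g := by
  refine ⟨fun ⟨hg, hcard, hinc⟩ => ?_, ?_⟩
  · obtain ⟨M, hM, rfl⟩ := exists_arcMap_eq hg (Finite.card_eq.mp hcard).some
    exact ⟨M, ⟨hM, hinc⟩, rfl⟩
  · rintro ⟨M, ⟨hM, hinc⟩, rfl⟩
    exact ⟨hM.involutive_arcMap, hM.card_fixedPoints_arcMap, hinc⟩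

theorem finrank_altInvariants [LinearOrder α] [Fintype α] [Fintype β] [DecidableEq β]
    [Fintype κ] [DecidableEq κ] : Module.finrank ℝ (altInvariants α β κ) =
      (boundedInvolutions α (Nat.card β) (Fintype.card κ)).ncard := by
  set S := boundedInvolutions α (Nat.card β) (Fintype.card κ)
  choose M hM harc using fun g : S => mem_boundedInvolutions_iff_exists_arcMap_eq.mp g.2
  have hspan : altInvariants α β κ =
      Submodule.span ℝ (Set.range fun g : S => altMatching κ (M g)) := by
    rw [altInvariants_eq_span]
    refine le_antisymm (Submodule.span_le.mpr ?_) (Submodule.span_mono ?_)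
    · rintro _ ⟨M', hM', rfl⟩
      refine Submodule.span_le.mpr ?_ hM'.altMatching_mem_span
      rintro _ ⟨N, hN, hinc, rfl⟩
      let g : S := ⟨arcMap N, mem_boundedInvolutions_iff_exists_arcMap_eq.mpr ⟨N, ⟨hN, hinc⟩, rfl⟩⟩
      exact Submodule.span_mono (Set.singleton_subset_iff.mpr (Set.mem_range_self g))
        (altMatching_mem_span_singleton (hM g).1 hN (harc g))
    · rintro _ ⟨g, rfl⟩
      exact ⟨M g, (hM g).1.toIsMatching, rfl⟩
  have hli : LinearIndependent ℝ fun g : S => altMatching κ (M g) :=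
    linearIndependent_altMatching (fun g => (hM g).1) (fun g => (hM g).2) fun g g' hgg' =>
      Subtype.ext (by rw [← harc g, ← harc g']; exact hgg')
  have := Fintype.ofFinite S
  rw [hspan, finrank_span_eq_card hli, Set.ncard_eq_toFinset_card', Set.toFinset_card]

lemma gOCount_eq_ncard (n m l : ℕ) : gOCount n m l = (boundedInvolutions (Fin n) m l).ncard := by
  have hfix (π : Equiv.Perm (Fin n)) : Nat.card (Function.fixedPoints π) =
      (Finset.univ.filter fun x => π x = x).card :=
    Nat.subtype_card _ fun x => Finset.mem_filter_univ x
  refine Nat.card_eq_of_bijective (fun π => ⟨π.1, fun x => DFunLike.congr_fun π.2.1 x,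
    (hfix π.1).trans π.2.2.1, π.2.2.2⟩) ⟨fun π ρ h => ?_, ?_⟩
  · exact Subtype.ext (DFunLike.coe_injective (congrArg Subtype.val h))
  · rintro ⟨g, hg, hcard, hinc⟩
    exact ⟨⟨hg.toPerm, Equiv.ext hg, (hfix _).symm.trans hcard, hinc⟩, rfl⟩

end Count

section HaarAverage

lemma integrable_of_continuous_of_compactSpace {X E : Type*} [TopologicalSpace X] [CompactSpace X]
    [MeasurableSpace X] [OpensMeasurableSpace X] [NormedAddCommGroup E] {μ : Measure X}
    [IsFiniteMeasureOnCompacts μ] {f : X → E} (hf : Continuous f) : Integrable f μ :=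
  hf.integrable_of_hasCompactSupport (.of_compactSpace f)

instance compactSpace_unitaryGroup {κ 𝕜 : Type*} [Fintype κ] [DecidableEq κ] [RCLike 𝕜] :
    CompactSpace (Matrix.unitaryGroup κ 𝕜) := by
  have hK : IsCompact (Set.univ.pi fun _ : κ => Set.univ.pi fun _ : κ =>
      Metric.closedBall (0 : 𝕜) 1) :=
    isCompact_univ_pi fun _ => isCompact_univ_pi fun _ => isCompact_closedBall 0 1
  exact isCompact_iff_compactSpace.mp <|
    hK.of_isClosed_subset (isClosed_unitary (R := Matrix κ κ 𝕜))
    fun U hU i _ j _ => mem_closedBall_zero_iff.mpr (entry_norm_bound_of_unitary hU i j)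

variable {G 𝕜 E : Type*} [Group G] [TopologicalSpace G] [CompactSpace G] [MeasurableSpace G]
  [OpensMeasurableSpace G] (μ : Measure G) [IsProbabilityMeasure μ] [RCLike 𝕜]
  [NormedAddCommGroup E] [NormedSpace 𝕜 E] [NormedSpace ℝ E] {ρ : Representation 𝕜 G E}

/-- The average of a continuous representation of a compact group. -/
def haarAverage (hρ : ∀ v, Continuous fun g => ρ g v) : E →ₗ[𝕜] E where
  toFun v := ∫ g, ρ g v ∂μ
  map_add' v w := by
    simp only [map_add]
    exact integral_add (integrable_of_continuous_of_compactSpace (hρ v))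
      (integrable_of_continuous_of_compactSpace (hρ w))
  map_smul' a v := by simp [integral_smul]

variable [FiniteDimensional 𝕜 E] (hρ : ∀ v, Continuous fun g => ρ g v)

lemma map_haarAverage {F : Type*} [NormedAddCommGroup F] [NormedSpace 𝕜 F] [NormedSpace ℝ F]
    [CompleteSpace F] (T : E →ₗ[𝕜] F) (v : E) :
    T (haarAverage μ hρ v) = ∫ g, T (ρ g v) ∂μ := by
  have : CompleteSpace E := FiniteDimensional.complete 𝕜 E
  exact ((T.toContinuousLinearMap).integral_comp_comm
    (integrable_of_continuous_of_compactSpace (hρ v))).symm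

lemma haarAverage_mem_invariants [MeasurableMul G] [μ.IsMulLeftInvariant] (v : E) :
    haarAverage μ hρ v ∈ ρ.invariants := fun g => by
  have : CompleteSpace E := FiniteDimensional.complete 𝕜 E
  rw [map_haarAverage]
  simp only [← Module.End.mul_apply, ← map_mul]
  exact integral_mul_left_eq_self (fun h => ρ h v) g

lemma haarAverage_of_mem_invariants {v : E} (hv : v ∈ ρ.invariants) :
    haarAverage μ hρ v = v := by
  have : CompleteSpace E := FiniteDimensional.complete 𝕜 E
  calc haarAverage μ hρ v = ∫ _, v ∂μ := integral_congr_ae (.of_forall hv)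
    _ = v := by simp

lemma trace_haarAverage_comp (P : E →ₗ[𝕜] E) :
    LinearMap.trace 𝕜 E (haarAverage μ hρ ∘ₗ P) = ∫ g, LinearMap.trace 𝕜 E (ρ g ∘ₗ P) ∂μ := by
  classical
  let b := Module.finBasis 𝕜 E
  have hcont (i) : Continuous fun g => b.coord i (ρ g (P (b i))) :=
    (b.coord i).continuous_of_finiteDimensional.comp (hρ _)
  have htrace (T : E →ₗ[𝕜] E) : LinearMap.trace 𝕜 E T = ∑ i, b.coord i (T (b i)) := by
    simp [LinearMap.trace_eq_matrix_trace 𝕜 b, Matrix.trace, LinearMap.toMatrix_apply]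
  simp only [htrace, LinearMap.comp_apply, map_haarAverage]
  exact (integral_finsetSum _ fun i _ => integrable_of_continuous_of_compactSpace (hcont i)).symm

lemma isProj_haarAverage_comp [MeasurableMul G] [μ.IsMulLeftInvariant]
    {p : Submodule 𝕜 E} {P : E →ₗ[𝕜] E} (hP : LinearMap.IsProj p P)
    (hp : ∀ g, ∀ v ∈ p, ρ g v ∈ p) :
    LinearMap.IsProj (ρ.invariants ⊓ p) (haarAverage μ hρ ∘ₗ P) where
  map_mem v := by
    have : CompleteSpace E := FiniteDimensional.complete 𝕜 E
    refine ⟨haarAverage_mem_invariants μ hρ _, ?_⟩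
    have h : P (haarAverage μ hρ (P v)) = haarAverage μ hρ (P v) := by
      rw [map_haarAverage]
      exact integral_congr_ae (.of_forall fun g => hP.map_id _ (hp g _ (hP.map_mem v)))
    exact h ▸ hP.map_mem _
  map_id v hv := by
    rw [LinearMap.comp_apply, hP.map_id v hv.2, haarAverage_of_mem_invariants μ hρ hv.1]

include hρ in
theorem finrank_invariants_inf_eq_integral_trace [MeasurableMul G] [μ.IsMulLeftInvariant]
    {p : Submodule 𝕜 E} {P : E →ₗ[𝕜] E} (hP : LinearMap.IsProj p P)
    (hp : ∀ g, ∀ v ∈ p, ρ g v ∈ p) :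
    (Module.finrank 𝕜 ↥(ρ.invariants ⊓ p) : 𝕜) = ∫ g, LinearMap.trace 𝕜 E (ρ g ∘ₗ P) ∂μ := by
  rw [← (isProj_haarAverage_comp μ hρ hP hp).trace, trace_haarAverage_comp]

end HaarAverage

section Minors

variable {β κ R : Type*} [Fintype κ] [DecidableEq κ]

/-- The sum of the principal minors of size `m`, i.e. the trace of the `m`-th exterior power. -/
def minorSum [CommRing R] (m : ℕ) (A : Matrix κ κ R) : R :=
  ∑ s ∈ Finset.powersetCard m (Finset.univ : Finset κ),
    (A.submatrix (Subtype.val : s → κ) Subtype.val).det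

variable [Fintype β] [DecidableEq β]

lemma sum_equiv_coe_comp {E : Type*} [AddCommMonoid E] {s : Finset κ}
    (hs : Fintype.card β = s.card) (F : (β → κ) → E) :
    ∑ e : β ≃ s, F (Subtype.val ∘ e) = ∑ d : β → κ with Finset.univ.image d = s, F d := by
  refine Finset.sum_bij (fun e _ => Subtype.val ∘ e) (fun e _ => ?_)
    (fun e _ e' _ h => Equiv.ext fun i => Subtype.ext (congrFun h i)) (fun d hd => ?_)
    fun _ _ => rfl
  · rw [Finset.mem_filter_univ, ← Finset.image_image, Finset.image_univ_equiv,
      Finset.univ_eq_attach, Finset.attach_image_val]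
  · obtain rfl := (Finset.mem_filter_univ d).mp hd
    let e (i : β) : Finset.univ.image d := ⟨d i, Finset.mem_image_of_mem d (Finset.mem_univ i)⟩
    have he : Function.Surjective e := by
      rintro ⟨x, hx⟩
      obtain ⟨i, -, rfl⟩ := Finset.mem_image.mp hx
      exact ⟨i, rfl⟩
    exact ⟨.ofBijective e ((Fintype.bijective_iff_surjective_and_card e).mpr
      ⟨he, by rw [hs, Fintype.card_coe]⟩), Finset.mem_univ _, rfl⟩

variable [CommRing R]

lemma sum_det_submatrix (A : Matrix κ κ R) : ∑ d : β → κ, (A.submatrix d d).det =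
    (Fintype.card β).factorial • minorSum (Fintype.card β) A := by
  have hinj : ∑ d : β → κ with Finset.univ.image d ∈ Finset.powersetCard (Fintype.card β) .univ,
      (A.submatrix d d).det = ∑ d : β → κ, (A.submatrix d d).det := by
    refine Finset.sum_filter_of_ne fun d _ hd => ?_
    rw [Finset.mem_powersetCard_univ]
    refine Finset.card_image_of_injective _ fun i j hij => ?_
    by_contra hne
    exact hd (det_zero_of_row_eq hne (by ext k; simp [hij]))
  rw [← hinj, ← Finset.sum_fiberwise_eq_sum_filter, minorSum, Finset.smul_sum]
  refine Finset.sum_congr rfl fun s hs => ?_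
  have hcard : Fintype.card β = Fintype.card s := by
    rw [Fintype.card_coe, Finset.mem_powersetCard_univ.mp hs]
  rw [← sum_equiv_coe_comp (hcard.trans (Fintype.card_coe s))]
  simp only [← submatrix_submatrix, det_submatrix_equiv_self, Finset.sum_const, Finset.card_univ,
    Fintype.card_equiv (Fintype.equivOfCardEq hcard)]

lemma minorSum_eq_zero {m : ℕ} (h : Fintype.card κ < m) (A : Matrix κ κ R) :
    minorSum m A = 0 := by
  rw [minorSum, Finset.powersetCard_eq_empty.mpr h, Finset.sum_empty]

lemma continuous_minorSum [TopologicalSpace R] [IsTopologicalRing R] (m : ℕ) :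
    Continuous (minorSum m : Matrix κ κ R → R) := by
  unfold minorSum
  fun_prop

lemma det_one_add_smul_eq_sum_minorSum (A : Matrix κ κ R) (a : R) {N : ℕ}
    (hN : Fintype.card κ < N) :
    (1 + a • A).det = ∑ m ∈ Finset.range N, a ^ m * minorSum m A := by
  set p := (1 + (Polynomial.X : Polynomial R) • A.map Polynomial.C).det with hp
  have hcoeff (m : ℕ) : p.coeff m = minorSum m A := coeff_det_one_add_X_smul_eq_sum_minors A m
  have hdeg : p.natDegree < N := by
    refine lt_of_le_of_lt (Polynomial.natDegree_le_iff_coeff_eq_zero.mpr fun m hm => ?_) hN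
    rw [hcoeff, minorSum_eq_zero hm]
  have heval : p.eval a = (1 + a • A).det := by
    rw [hp, ← Polynomial.coe_evalRingHom, RingHom.map_det]
    congr 1
    ext i j
    simp [Matrix.one_apply, apply_ite, mul_comm a]
  simp only [← heval, Polynomial.eval_eq_sum_range' hdeg, hcoeff, mul_comm]

end Minors

section Character

variable {α β κ : Type*} [Fintype α] [DecidableEq α] [Fintype β] [DecidableEq β]
  [Fintype κ] [DecidableEq κ]

lemma trace_mulVecLin_comp_funLeft {X R : Type*} [Fintype X] [CommRing R]
    (B : Matrix X X R) (φ : X → X) :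
    LinearMap.trace R _ (B.mulVecLin ∘ₗ LinearMap.funLeft R R φ) = ∑ c, B (φ c) c := by
  classical
  rw [LinearMap.trace_eq_matrix_trace R (Pi.basisFun R X), Matrix.trace]
  simp only [diag_apply, LinearMap.toMatrix_apply, Pi.basisFun_apply, LinearMap.comp_apply,
    mulVecLin_apply, Pi.basisFun_repr, mulVec, dotProduct, LinearMap.funLeft_apply]
  rw [Finset.sum_comm]
  simp [Pi.single_apply]

omit [DecidableEq κ] in
lemma sum_tensorPow_comp_permInr {R : Type*} [CommRing R] (A : Matrix κ κ R) (τ : Equiv.Perm β) :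
    ∑ c, tensorPow (α ⊕ β) A (c ∘ permInr α τ) c =
      (∑ d : β → κ, ∏ j, A (d (τ j)) (d j)) * A.trace ^ Fintype.card α := by
  have htrace : A.trace ^ Fintype.card α = ∑ d : α → κ, ∏ j, A (d j) (d j) := by
    rw [Matrix.trace, ← Finset.card_univ, ← Finset.prod_const, Fintype.prod_sum]
    rfl
  rw [← (Equiv.sumArrowEquivProdArrow α β κ).symm.sum_comp, Fintype.sum_prod_type_right,
    htrace, Finset.sum_mul_sum]
  simp [tensorPow_apply, Equiv.sumArrowEquivProdArrow, mul_comm]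

lemma trace_tensorPow_comp_antisymmetrizer (A : Matrix κ κ ℝ) :
    LinearMap.trace ℝ _ ((tensorPow (α ⊕ β) A).mulVecLin ∘ₗ antisymmetrizer α β κ) =
      minorSum (Fintype.card β) A * A.trace ^ Fintype.card α := by
  have hsign (τ : Equiv.Perm β) :
      LinearMap.trace ℝ _ ((tensorPow (α ⊕ β) A).mulVecLin ∘ₗ signRep α β κ τ) =
        τ.sign • ∑ c, tensorPow (α ⊕ β) A (c ∘ permInr α τ) c := by
    rw [← trace_mulVecLin_comp_funLeft, ← LinearMap.map_smul_of_tower,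
      ← LinearMap.comp_smul]
    rfl
  have hdet : ∑ d : β → κ, (A.submatrix d d).det =
      ∑ τ : Equiv.Perm β, τ.sign • ∑ d : β → κ, ∏ j, A (d (τ j)) (d j) := by
    simp only [det_apply, submatrix_apply, Finset.smul_sum]
    exact Finset.sum_comm
  rw [antisymmetrizer_eq_smul_sum, LinearMap.comp_smul, map_smul, ← Module.End.mul_eq_comp,
    Finset.mul_sum, map_sum]
  simp only [Module.End.mul_eq_comp, hsign, sum_tensorPow_comp_permInr, ← smul_mul_assoc,
    ← Finset.sum_mul]
  rw [← hdet, sum_det_submatrix, Fintype.card_perm, nsmul_eq_mul, smul_eq_mul, ← mul_assoc,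
    inv_mul_cancel₀ (Nat.cast_ne_zero.mpr (Nat.factorial_ne_zero _)), one_mul]

end Character

theorem ncard_boundedInvolutions_eq_integral {α κ : Type*} [Fintype α] [LinearOrder α]
    [Fintype κ] [DecidableEq κ] [MeasurableSpace (Matrix.orthogonalGroup κ ℝ)]
    [BorelSpace (Matrix.orthogonalGroup κ ℝ)] (μ : Measure (Matrix.orthogonalGroup κ ℝ))
    [IsProbabilityMeasure μ] [μ.IsMulLeftInvariant] (m : ℕ) :
    ((boundedInvolutions α m (Fintype.card κ)).ncard : ℝ) =
      ∫ U, minorSum m (U : Matrix κ κ ℝ) * (U : Matrix κ κ ℝ).trace ^ Fintype.card α ∂μ := by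
  have hcont (v : (α ⊕ Fin m → κ) → ℝ) :
      Continuous fun U : Matrix.orthogonalGroup κ ℝ => tensorRep (α ⊕ Fin m) κ U v :=
    (continuous_tensorPow.comp continuous_subtype_val).matrix_mulVec continuous_const
  have hinv (U : Matrix.orthogonalGroup κ ℝ) (v : (α ⊕ Fin m → κ) → ℝ)
      (hv : v ∈ (signRep α (Fin m) κ).invariants) :
      tensorRep (α ⊕ Fin m) κ U v ∈ (signRep α (Fin m) κ).invariants := fun τ => by
    rw [signRep_tensorRep_comm, hv τ]
  calc ((boundedInvolutions α m (Fintype.card κ)).ncard : ℝ)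
      = Module.finrank ℝ (altInvariants α (Fin m) κ) := by
        rw [finrank_altInvariants, Nat.card_fin]
    _ = ∫ U, LinearMap.trace ℝ _
          (tensorRep (α ⊕ Fin m) κ U ∘ₗ antisymmetrizer α (Fin m) κ) ∂μ :=
        finrank_invariants_inf_eq_integral_trace μ hcont isProj_antisymmetrizer hinv
    _ = ∫ U, minorSum m (U : Matrix κ κ ℝ) * (U : Matrix κ κ ℝ).trace ^ Fintype.card α ∂μ := by
        refine integral_congr_ae (.of_forall fun U => ?_)
        exact (trace_tensorPow_comp_antisymmetrizer _).trans (by rw [Fintype.card_fin])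

section GeneratingFunction

lemma hasSum_pow_div_factorial_mul_integral {X : Type*} [TopologicalSpace X] [CompactSpace X]
    [MeasurableSpace X] [OpensMeasurableSpace X] (μ : Measure X) [IsFiniteMeasure μ] {f g : X → ℝ}
    (hf : Continuous f) (hg : Continuous g) (t : ℝ) :
    HasSum (fun n : ℕ => t ^ n / n.factorial * ∫ x, f x * g x ^ n ∂μ)
      (∫ x, f x * Real.exp (t * g x) ∂μ) := by
  obtain ⟨C, hC⟩ := isCompact_univ.exists_bound_of_continuousOn hf.continuousOn
  obtain ⟨T, hT⟩ := isCompact_univ.exists_bound_of_continuousOn hg.continuousOn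
  have hexp (x : ℝ) : HasSum (fun n : ℕ => x ^ n / n.factorial) (Real.exp x) := by
    rw [Real.exp_eq_exp_ℝ]
    exact NormedSpace.expSeries_div_hasSum_exp x
  have hbound (n : ℕ) (x : X) : ‖t ^ n / n.factorial * (f x * g x ^ n)‖ ≤
      C * ((|t| * T) ^ n / n.factorial) := by
    rw [norm_mul, norm_mul, norm_div, norm_pow, norm_pow, Real.norm_natCast, Real.norm_eq_abs t]
    calc |t| ^ n / n.factorial * (‖f x‖ * ‖g x‖ ^ n)
        ≤ |t| ^ n / n.factorial * (C * T ^ n) := by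
          gcongr
          exacts [(norm_nonneg _).trans (hC x trivial), hC x trivial, hT x trivial]
      _ = C * ((|t| * T) ^ n / n.factorial) := by ring
  have hsum (x : X) : HasSum (fun n : ℕ => t ^ n / n.factorial * (f x * g x ^ n))
      (f x * Real.exp (t * g x)) :=
    ((hexp (t * g x)).mul_left (f x)).congr_fun fun n => by ring
  simp only [← integral_const_mul]
  exact hasSum_integral_of_dominated_convergence
    (fun n _ => C * ((|t| * T) ^ n / n.factorial))
    (fun n => (integrable_of_continuous_of_compactSpace (by fun_prop)).aestronglyMeasurable)
    (fun n => .of_forall (hbound n)) (.of_forall fun _ => (hexp _).summable.mul_left C)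
    (integrable_const _) (.of_forall hsum)

lemma gOCount_eq_integral (n m l : ℕ) (μ : Measure (Matrix.orthogonalGroup (Fin l) ℝ))
    [IsProbabilityMeasure μ] [μ.IsMulLeftInvariant] :
    (gOCount n m l : ℝ) = ∫ U, minorSum m (U : Matrix (Fin l) (Fin l) ℝ) *
      (U : Matrix (Fin l) (Fin l) ℝ).trace ^ n ∂μ := by
  have h := ncard_boundedInvolutions_eq_integral (α := Fin n) μ m
  rwa [Fintype.card_fin, Fintype.card_fin, ← gOCount_eq_ncard] at h

lemma gOCount_eq_zero {n m : ℕ} (h : n < m) (l : ℕ) : gOCount n m l = 0 := by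
  have : IsEmpty {π : Equiv.Perm (Fin n) //
      π * π = 1 ∧ (Finset.univ.filter fun x => π x = x).card = m ∧ lisLE π l} :=
    ⟨fun ⟨π, _, hcard, _⟩ => h.not_ge <| by
      simpa [hcard] using Finset.card_le_univ (Finset.univ.filter fun x => π x = x)⟩
  exact Nat.card_of_isEmpty

lemma sum_pow_mul_gOCount (n l : ℕ) (α : ℝ) (μ : Measure (Matrix.orthogonalGroup (Fin l) ℝ))
    [IsProbabilityMeasure μ] [μ.IsMulLeftInvariant] :
    ∑ m ∈ Finset.range (n + 1), α ^ m * (gOCount n m l : ℝ) =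
      ∫ U, (1 + α • (U : Matrix (Fin l) (Fin l) ℝ)).det *
        (U : Matrix (Fin l) (Fin l) ℝ).trace ^ n ∂μ := by
  let N := max (n + 1) (l + 1)
  have hint (m : ℕ) : Integrable (fun U : Matrix.orthogonalGroup (Fin l) ℝ =>
      α ^ m * (minorSum m (U : Matrix (Fin l) (Fin l) ℝ) *
        (U : Matrix (Fin l) (Fin l) ℝ).trace ^ n)) μ :=
    integrable_of_continuous_of_compactSpace <| continuous_const.mul <|
      ((continuous_minorSum m).comp continuous_subtype_val).mul <| by fun_prop
  calc ∑ m ∈ Finset.range (n + 1), α ^ m * (gOCount n m l : ℝ)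
      = ∑ m ∈ Finset.range N, α ^ m * (gOCount n m l : ℝ) := by
        refine Finset.sum_subset (Finset.range_mono (le_max_left _ _)) fun m _ hm => ?_
        rw [gOCount_eq_zero (by simpa using hm), Nat.cast_zero, mul_zero]
    _ = ∫ U, ∑ m ∈ Finset.range N, α ^ m * (minorSum m (U : Matrix (Fin l) (Fin l) ℝ) *
          (U : Matrix (Fin l) (Fin l) ℝ).trace ^ n) ∂μ := by
        rw [integral_finsetSum _ fun m _ => hint m]
        simp only [integral_const_mul, gOCount_eq_integral n _ l μ]
    _ = ∫ U, (1 + α • (U : Matrix (Fin l) (Fin l) ℝ)).det *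
          (U : Matrix (Fin l) (Fin l) ℝ).trace ^ n ∂μ := by
        have hN : Fintype.card (Fin l) < N := by simp [N]
        simp only [det_one_add_smul_eq_sum_minorSum _ α hN, Finset.sum_mul, mul_assoc]

theorem gO_gf_eq_orthogonal_integral_general (l : ℕ) (t α : ℝ)
    (μ : Measure (Matrix.orthogonalGroup (Fin l) ℝ)) [μ.IsMulLeftInvariant]
    [IsProbabilityMeasure μ] :
    HasSum (fun n : ℕ => (t ^ n / (Nat.factorial n : ℝ)) *
        ∑ m ∈ Finset.range (n + 1), α ^ m * (gOCount n m l : ℝ))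
      (∫ U, Matrix.det (1 + α • (U : Matrix (Fin l) (Fin l) ℝ)) *
        Real.exp (t * Matrix.trace (U : Matrix (Fin l) (Fin l) ℝ)) ∂μ) := by
  simp only [sum_pow_mul_gOCount _ l α μ]
  exact hasSum_pow_div_factorial_mul_integral μ (by fun_prop) (by fun_prop) t

end GeneratingFunction

/-- `Σ_{n≥0} (t^n/n!) Σ_{m=0}^n α^m g^O_{n,m,l} = E_{U∈O(l)} det(I + αU)·exp(t·Tr(U))`. -/
theorem gO_gf_eq_orthogonal_integral (l : ℕ) (t α : ℝ) (hα : 0 ≤ α)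
    (μ : Measure (Matrix.orthogonalGroup (Fin l) ℝ))
    [μ.IsHaarMeasure] [IsProbabilityMeasure μ] :
    ∑' n : ℕ, (t ^ n / (Nat.factorial n : ℝ)) *
        ∑ m ∈ Finset.range (n + 1), α ^ m * (gOCount n m l : ℝ) =
      ∫ U, Matrix.det (1 + α • (U : Matrix (Fin l) (Fin l) ℝ)) *
        Real.exp (t * Matrix.trace (U : Matrix (Fin l) (Fin l) ℝ)) ∂μ :=
  (gO_gf_eq_orthogonal_integral_general l t α μ).tsum_eq
end
end

section
/- For any nonnegative integers l and n, the family of operators { T_l(π) : π ∈ S_n with L⁻(π) ≤ l } is a basis (i.e. is linearly independent and spans) of the commutant C_n(U(l)) = { A ∈ End((ℂ^l)^{⊗n}) : A ∘ U^{⊗n} = U^{⊗n} ∘ A for every l×l unitary matrix U }, where L⁻(π) is the length of the longest strictly decreasing subsequence of π. -/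
open scoped TensorProduct

noncomputable section

/-- `decLE π l` means the longest strictly decreasing subsequence of the permutation `π`
has length at most `l`. -/
def decLE {N : ℕ} (π : Equiv.Perm (Fin N)) (l : ℕ) : Prop :=
  ∀ (k : ℕ) (f : Fin k → Fin N), StrictMono f → StrictAnti (fun i => π (f i)) → k ≤ l

/-- The endomorphism `M^{⊗n}` of `(ℂ^l)^{⊗n}` induced by a matrix `M`, acting as `M`
on each tensor factor. -/
def tpow (n l : ℕ) (M : Matrix (Fin l) (Fin l) ℂ) :
    Module.End ℂ (⨂[ℂ] _ : Fin n, (Fin l → ℂ)) :=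
  PiTensorProduct.map (fun _ : Fin n => Matrix.toLin' M)

/-!
In the basis of words, `T π` becomes a permutation matrix. A permutation whose decreasing
subsequences have length at most `l` is a union of `l` increasing subsequences, and labelling these
gives a word whose entry in the matrix of `π` is nonzero, while it vanishes for all
lexicographically smaller permutations: this is linear independence. A longer decreasing subsequence
yields an alternating sum over the permutations of its positions that vanishes for lack of letters,
and this rewrites `T π` in lexicographically smaller permutations.

That all the `T π` span the commutant is Schur-Weyl duality. By the double centralizer theorem it
is enough that an operator commuting with all `U^{⊗n}` commutes with every symmetrized tensor
product of matrices. It commutes with `D^{⊗n}` for `D` diagonal because a polynomial identity on a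
power of the unit circle holds everywhere, with `H^{⊗n}` for `H` Hermitian by diagonalization, and
with the symmetrized products by polarization, since Hermitian matrices span all matrices.
-/

open Equiv

section Coloring

open scoped SetRel

theorem exists_coloring_of_forall_relSeries_length_lt {α : Type*} {r : SetRel α α} {l : ℕ}
    (h : ∀ s : RelSeries r, s.length < l) : ∃ c : α → Fin l, ∀ i j, i ~[r] j → c j < c i := by
  classical
  -- Colour each point by the length of the longest chain starting there.
  let IsHeadLength (i : α) (k : ℕ) : Prop := ∃ s : RelSeries r, s.head = i ∧ s.length = k
  have lt_of_isHeadLength {i k} : IsHeadLength i k → k < l := by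
    rintro ⟨s, -, rfl⟩
    exact h s
  have isHeadLength_zero (i : α) : IsHeadLength i 0 := ⟨.singleton r i, rfl, rfl⟩
  have isHeadLength_max (i : α) : IsHeadLength i (Nat.findGreatest (IsHeadLength i) l) :=
    Nat.findGreatest_spec l.zero_le (isHeadLength_zero i)
  refine ⟨fun i => ⟨_, lt_of_isHeadLength (isHeadLength_max i)⟩, fun i j hij => ?_⟩
  obtain ⟨s, hsj, hs⟩ := isHeadLength_max j
  have hcons : IsHeadLength i (Nat.findGreatest (IsHeadLength j) l + 1) :=
    ⟨s.cons i (hsj ▸ hij), s.head_cons i _, by simp only [RelSeries.cons_length, hs]⟩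
  exact Nat.le_findGreatest (lt_of_isHeadLength hcons).le hcons

theorem decLE.exists_coloring {n l : ℕ} {π : Perm (Fin n)} (hπ : decLE π l) :
    ∃ c : Fin n → Fin l, ∀ i j, i < j → c i = c j → π i < π j := by
  let inversions : SetRel (Fin n) (Fin n) := {p | p.1 < p.2 ∧ π p.2 < π p.1}
  obtain ⟨c, hc⟩ := exists_coloring_of_forall_relSeries_length_lt (r := inversions) fun s =>
    hπ (s.length + 1) s (Fin.strictMono_iff_lt_succ.2 fun i => (s.step i).1)
      (Fin.strictAnti_iff_succ_lt.2 fun i => (s.step i).2)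
  refine ⟨c, fun i j hij hcij => ?_⟩
  by_contra! hle
  exact (hc i j ⟨hij, hle.lt_of_ne (π.injective.ne hij.ne')⟩).ne' hcij

end Coloring

section Lex

variable {ι β : Type*} [LinearOrder ι] [WellFoundedLT ι] {τ : Perm ι}

theorem exists_lt_apply_and_forall_lt_apply_eq (hτ : τ ≠ 1) : ∃ i, i < τ i ∧ ∀ j < i, τ j = j := by
  obtain ⟨i, hi, hmin⟩ := wellFounded_lt.has_min {i | τ i ≠ i} (by
    by_contra! hfix
    exact hτ (Equiv.ext fun i => by simpa using Set.eq_empty_iff_forall_notMem.1 hfix i))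
  have hfix : ∀ j < i, τ j = j := fun j hj => not_not.1 fun hmoved => hmin j hmoved hj
  refine ⟨i, (Ne.lt_or_gt hi).resolve_left fun hlt => hi ?_, hfix⟩
  exact τ.injective (hfix _ hlt)

theorem toLex_lt_toLex_comp [LT β] (f : ι → β) (hτ : τ ≠ 1)
    (h : ∀ i, i < τ i → f i < f (τ i)) : toLex f < toLex (f ∘ τ) := by
  obtain ⟨i, hi, hfix⟩ := exists_lt_apply_and_forall_lt_apply_eq hτ
  exact ⟨i, fun j hj => by simp [hfix j hj], h i hi⟩

theorem toLex_comp_lt_toLex [LT β] (f : ι → β) (hτ : τ ≠ 1)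
    (h : ∀ i, i < τ i → f (τ i) < f i) : toLex (f ∘ τ) < toLex f := by
  obtain ⟨i, hi, hfix⟩ := exists_lt_apply_and_forall_lt_apply_eq hτ
  exact ⟨i, fun j hj => by simp [hfix j hj], h i hi⟩

end Lex

section WordPermMatrix

/-- The matrix, indexed by words `ι → κ`, of the operator on the `ι`-fold tensor power of `κ → R`
which places the `π i`-th factor at position `i`. -/
def wordPermMatrix (R : Type*) {ι : Type*} (κ : Type*) [Fintype ι] [DecidableEq κ] [Zero R] [One R]
    (π : Perm ι) : Matrix (ι → κ) (ι → κ) R :=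
  Perm.permMatrix R (π.arrowCongr (.refl κ))

variable {R ι κ : Type*} [Fintype ι] [DecidableEq κ]

theorem wordPermMatrix_apply [Zero R] [One R] (π : Perm ι) (w v : ι → κ) :
    wordPermMatrix R κ π w v = if w = v ∘ π then 1 else 0 := by
  have h : w ∘ π.symm = v ↔ w = v ∘ π := Equiv.comp_symm_eq ..
  exact (PEquiv.toMatrix_apply ..).trans (if_congr (Option.mem_some_iff.trans h) rfl rfl)

section Semiring

variable [DecidableEq ι] [Fintype κ] [Semiring R]

variable (R κ) in
/-- The left action of permutations on word-indexed matrices; `wordPermMatrix` reverses products,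
whence the inverse. -/
def wordPermMatrixHom : Perm ι →* Matrix (ι → κ) (ι → κ) R where
  toFun π := wordPermMatrix R κ π⁻¹
  map_one' := Matrix.permMatrix_one (n := ι → κ)
  map_mul' π τ := by
    rw [mul_inv_rev]
    exact Matrix.permMatrix_mul (n := ι → κ) (τ⁻¹.arrowCongr (.refl κ)) (π⁻¹.arrowCongr (.refl κ))

theorem range_wordPermMatrixHom :
    Set.range (wordPermMatrixHom (ι := ι) R κ) = Set.range (wordPermMatrix R κ) :=
  inv_surjective.range_comp (wordPermMatrix R κ)

theorem commute_wordPermMatrix_iff {π : Perm ι} {X : Matrix (ι → κ) (ι → κ) R} :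
    Commute (wordPermMatrix R κ π) X ↔ ∀ w v, X (w ∘ π) (v ∘ π) = X w v := by
  have left_mul : wordPermMatrix R κ π * X = X.submatrix (· ∘ π.symm) id :=
    PEquiv.toMatrix_toPEquiv_mul (π.arrowCongr (.refl κ)) X
  have right_mul : X * wordPermMatrix R κ π = X.submatrix id (· ∘ π) :=
    PEquiv.mul_toMatrix_toPEquiv X (π.arrowCongr (.refl κ))
  rw [Commute, SemiconjBy, left_mul, right_mul, ← Matrix.ext_iff]
  refine ⟨fun h w v => ?_, fun h w v => ?_⟩
  · simpa [Function.comp_assoc] using (h (w ∘ π) v).symm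
  · simpa [Function.comp_assoc] using (h (w ∘ π.symm) v).symm

end Semiring

section Ring

variable [Fintype κ] [Ring R]

theorem linearIndependent_wordPermMatrix_decLE {n l : ℕ} (hl : l ≤ Fintype.card κ) :
    LinearIndependent R
      fun π : {π : Perm (Fin n) // decLE π l} => wordPermMatrix R κ π.1 := by
  classical
  refine Fintype.linearIndependent_iff.2 fun g hg π => ?_
  induction π using (InvImage.wf (fun π : {π : Perm (Fin n) // decLE π l} => toLex ⇑π.1)
    wellFounded_gt).induction with
  | _ π ih =>
  obtain ⟨b⟩ := Function.Embedding.nonempty_of_card_le ((Fintype.card_fin l).trans_le hl)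
  obtain ⟨c, hc⟩ := π.2.exists_coloring
  let w := b ∘ c
  -- Only permutations which are not lexicographically smaller than `π` have a nonzero entry at
  -- `(w, w ∘ π⁻¹)`, so that the relation is triangular.
  have hterm (σ) : g σ * wordPermMatrix R κ σ.1 w (w ∘ ⇑π.1⁻¹) = if σ = π then g π else 0 := by
    rw [wordPermMatrix_apply]
    split_ifs with hw hσ hσ
    · rw [hσ, mul_one]
    · have hlt : toLex ⇑π.1 < toLex (π.1 ∘ ⇑(π.1⁻¹ * σ.1)) := by
        refine toLex_lt_toLex_comp _ (fun h => hσ (Subtype.ext (inv_mul_eq_one.1 h).symm)) ?_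
        exact fun i hi => hc _ _ hi (b.injective (congrFun hw i))
      rw [ih σ (by rwa [← Perm.coe_mul, mul_inv_cancel_left] at hlt), zero_mul]
    · exact absurd (by ext; simp [hσ]) hw
    · rw [mul_zero]
  have hentry := congr($hg w (w ∘ ⇑π.1⁻¹))
  simpa only [Matrix.sum_apply, Matrix.smul_apply, smul_eq_mul, hterm, Finset.sum_ite_eq',
    Finset.mem_univ, if_true, Matrix.zero_apply] using hentry

theorem sum_sign_smul_wordPermMatrix_eq_zero [DecidableEq ι] {s : Finset ι}
    (hs : Fintype.card κ < s.card)
    (π : Perm ι) :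
    ∑ τ : Perm ι with τ.support ⊆ s, (τ.sign : ℤ) • wordPermMatrix R κ (π * τ) = 0 := by
  ext w v
  -- Two letters of `v ∘ π` in `s` coincide; swapping them cancels the terms in pairs.
  obtain ⟨i, hi, j, hj, hij, hv⟩ := Finset.exists_ne_map_eq_of_card_lt_of_maps_to
    (t := Finset.univ) (f := v ∘ π) (by simpa using hs) (by simp)
  have comp_swap : (v ∘ π) ∘ swap i j = v ∘ π := by
    rw [Equiv.comp_swap_eq_update, hv, Function.update_eq_self, ← hv, Function.update_eq_self]
  simp only [Matrix.sum_apply, Matrix.smul_apply, Matrix.zero_apply]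
  refine Finset.sum_involution (fun τ _ => swap i j * τ) (fun τ _ => ?_) (fun τ _ _ => ?_)
    (fun τ hτ => ?_) fun τ _ => by simp
  · have hword : v ∘ ⇑(π * (swap i j * τ)) = v ∘ ⇑(π * τ) := congr($comp_swap ∘ τ)
    rw [wordPermMatrix_apply, wordPermMatrix_apply, hword, Perm.sign_mul, Perm.sign_swap hij]
    simp
  · simpa using hij
  · simp only [Finset.mem_filter, Finset.mem_univ, true_and] at hτ ⊢
    refine (Perm.support_mul_le _ _).trans (sup_le ?_ hτ)
    simp [Perm.support_swap hij, Finset.insert_subset_iff, hi, hj]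

theorem wordPermMatrix_mem_span_decLE {n l : ℕ} (hl : Fintype.card κ ≤ l) (π : Perm (Fin n)) :
    wordPermMatrix R κ π ∈ Submodule.span R
      (Set.range fun σ : {σ : Perm (Fin n) // decLE σ l} => wordPermMatrix R κ σ.1) := by
  induction π using (InvImage.wf (fun π : Perm (Fin n) => toLex ⇑π) wellFounded_lt).induction with
  | _ π ih =>
  by_cases hπ : decLE π l
  · exact Submodule.subset_span ⟨⟨π, hπ⟩, rfl⟩
  simp only [decLE, not_forall, not_le] at hπ
  obtain ⟨k, f, hf, hanti, hk⟩ := hπ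
  -- Permuting the entries along a decreasing subsequence can only lower `π` lexicographically.
  let s := Finset.univ.map ⟨f, hf.injective⟩
  have hsum := sum_sign_smul_wordPermMatrix_eq_zero (R := R) (κ := κ) (s := s)
    (by simpa [s] using hl.trans_lt hk) π
  rw [← Finset.add_sum_erase _ _ (a := 1) (by simp), mul_one, Perm.sign_one, Units.val_one,
    one_smul] at hsum
  rw [eq_neg_of_add_eq_zero_left hsum]
  refine neg_mem (Submodule.sum_mem _ fun τ hτ => zsmul_mem (ih _ ?_) _)
  simp only [Finset.mem_erase, Finset.mem_filter, Finset.mem_univ, true_and] at hτ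
  refine toLex_comp_lt_toLex π hτ.1 fun i hi => ?_
  have mem_s {j} (hj : τ j ≠ j) : j ∈ s := hτ.2 (Perm.mem_support.2 hj)
  obtain ⟨a, -, rfl⟩ := Finset.mem_map.1 (mem_s hi.ne')
  obtain ⟨b, -, hb⟩ := Finset.mem_map.1 (mem_s (τ.injective.ne hi.ne'))
  rw [← hb] at hi ⊢
  exact hanti (hf.lt_iff_lt.1 hi)

theorem span_range_wordPermMatrix_decLE {n l : ℕ} (hl : Fintype.card κ ≤ l) :
    Submodule.span R
        (Set.range fun σ : {σ : Perm (Fin n) // decLE σ l} => wordPermMatrix R κ σ.1) =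
      Submodule.span R (Set.range (wordPermMatrix R κ)) :=
  le_antisymm (Submodule.span_mono (Set.range_comp_subset_range Subtype.val (wordPermMatrix R κ)))
    (Submodule.span_le.2 (Set.range_subset_iff.2 (wordPermMatrix_mem_span_decLE hl)))

end Ring

end WordPermMatrix

section DoubleCentralizer

theorem asAlgebraHom_mem_span_range {k G V : Type*} [CommSemiring k] [Monoid G] [AddCommMonoid V]
    [Module k V] (ρ : Representation k G V) (a : MonoidAlgebra k G) :
    ρ.asAlgebraHom a ∈ Submodule.span k (Set.range ρ) := by
  rw [Representation.asAlgebraHom_def, MonoidAlgebra.lift_apply]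
  exact Submodule.sum_mem _ fun g _ => Submodule.smul_mem _ _ (Submodule.subset_span ⟨g, rfl⟩)

variable {k G : Type*} [Field k] [Group G] [Finite G] [NeZero (Nat.card G : k)]

theorem end_mem_span_range_of_mem_centralizer_centralizer {V : Type*} [AddCommGroup V]
    [Module k V] [Module.Finite k V] (ρ : Representation k G V) {A : Module.End k V}
    (hA : A ∈ Set.centralizer (Set.centralizer (Set.range ρ))) :
    A ∈ Submodule.span k (Set.range ρ) := by
  have mem_centralizer (φ : Module.End (MonoidAlgebra k G) ρ.asModule) :
      (φ.restrictScalars k : Module.End k ρ.asModule) ∈ Set.centralizer (Set.range ρ) := by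
    rintro _ ⟨g, rfl⟩
    refine LinearMap.ext fun v => ?_
    have hsmul (u : ρ.asModule) : (MonoidAlgebra.single g 1 : MonoidAlgebra k G) • u = ρ g u :=
      (ρ.single_smul 1 g u).trans (one_smul k _)
    exact (hsmul (φ v)).symm.trans ((φ.map_smul _ v).symm.trans (congrArg φ (hsmul v)))
  let f : Module.End (Module.End (MonoidAlgebra k G) ρ.asModule) ρ.asModule :=
    { toFun := A
      map_add' := map_add A
      map_smul' φ v := (LinearMap.congr_fun (hA _ (mem_centralizer φ)) v).symm }
  obtain ⟨s, hs⟩ := Module.Finite.fg_top (R := k) (M := V)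
  obtain ⟨a, ha⟩ := jacobson_density f s
  have hAa : A = ρ.asAlgebraHom a := LinearMap.ext_on hs fun v hv => ha v hv
  exact hAa ▸ asAlgebraHom_mem_span_range ρ a

theorem matrix_mem_span_range_of_mem_centralizer_centralizer {m : Type*} [Fintype m] [DecidableEq m]
    (ρ : G →* Matrix m m k) {A : Matrix m m k}
    (hA : A ∈ Set.centralizer (Set.centralizer (Set.range ρ))) :
    A ∈ Submodule.span k (Set.range ρ) := by
  let e : Matrix m m k ≃ₐ[k] Module.End k (m → k) := Matrix.toLinAlgEquiv'
  let ρ' : Representation k G (m → k) := (e : Matrix m m k →* _).comp ρ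
  have hrange : Set.range ρ' = e.toLinearMap '' Set.range ρ := Set.range_comp e ρ
  rw [← Submodule.apply_mem_span_image_iff_mem_span (f := e.toLinearMap) e.injective, ← hrange]
  refine end_mem_span_range_of_mem_centralizer_centralizer ρ' fun B hB => ?_
  obtain ⟨X, rfl⟩ := e.surjective B
  have hX : X ∈ Set.centralizer (Set.range ρ) := by
    rintro _ ⟨g, rfl⟩
    exact e.injective (by simpa [ρ'] using! hB _ ⟨g, rfl⟩)
  simpa using! congr(e $(hA X hX))

end DoubleCentralizer

section PiKronecker

variable {R ι κ : Type*} [Fintype ι] [CommSemiring R]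

variable (R ι κ) in
/-- The Kronecker product of a family of matrices, indexed by words, as a multilinear map: the
matrix of the tensor product of the corresponding operators. -/
def piKronecker :
    MultilinearMap R (fun _ : ι => Matrix κ κ R) (Matrix (ι → κ) (ι → κ) R) :=
  MultilinearMap.pi fun w => MultilinearMap.pi fun v =>
    (MultilinearMap.mkPiAlgebra R ι R).compLinearMap fun i => Matrix.entryLinearMap R R (w i) (v i)

theorem piKronecker_apply (M : ι → Matrix κ κ R) (w v : ι → κ) :
    piKronecker R ι κ M w v = ∏ i, M i (w i) (v i) :=
  rfl

theorem piKronecker_mul [DecidableEq ι] [Fintype κ] (M N : ι → Matrix κ κ R) :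
    piKronecker R ι κ M * piKronecker R ι κ N = piKronecker R ι κ (M * N) := by
  ext w v
  simp only [Matrix.mul_apply, piKronecker_apply, Fintype.prod_sum, Finset.prod_mul_distrib,
    Pi.mul_apply]

variable [DecidableEq κ]

theorem piKronecker_diagonal (d : ι → κ → R) :
    piKronecker R ι κ (fun i => Matrix.diagonal (d i)) =
      Matrix.diagonal fun w => ∏ i, d i (w i) := by
  ext w v
  simp only [piKronecker_apply, Matrix.diagonal_apply, Fintype.prod_ite_zero, funext_iff]

theorem piKronecker_single (w v : ι → κ) :
    piKronecker R ι κ (fun i => Matrix.single (w i) (v i) 1) = Matrix.single w v 1 := by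
  ext a b
  simp only [piKronecker_apply, Matrix.single_apply, Fintype.prod_ite_zero, Finset.prod_const_one,
    funext_iff, forall_and]

theorem commute_wordPermMatrix_piKronecker [DecidableEq ι] [Fintype κ] (π : Perm ι)
    (M : Matrix κ κ R) :
    Commute (wordPermMatrix R κ π) (piKronecker R ι κ fun _ => M) :=
  commute_wordPermMatrix_iff.2 fun w v => Equiv.prod_comp π fun i => M (w i) (v i)

theorem mem_span_range_sum_piKronecker_comp [DecidableEq ι] [Fintype κ]
    (hcard : IsUnit (Nat.card (Perm ι) : R)) {X : Matrix (ι → κ) (ι → κ) R}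
    (hX : ∀ π, Commute (wordPermMatrix R κ π) X) :
    X ∈ Submodule.span R (Set.range fun M => ∑ σ : Perm ι, piKronecker R ι κ (M ∘ σ)) := by
  have hterm (σ : Perm ι) :
      X = ∑ w, ∑ v, X w v • piKronecker R ι κ
        ((fun i => Matrix.single (w i) (v i) (1 : R)) ∘ σ) := by
    have hσ := commute_wordPermMatrix_iff.1 (hX σ)
    calc X = ∑ w, ∑ v, X w v • Matrix.single w v (1 : R) := by
          simpa using Matrix.matrix_eq_sum_single X
      _ = ∑ w, ∑ v, X (w ∘ σ) (v ∘ σ) • Matrix.single (w ∘ σ) (v ∘ σ) (1 : R) := by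
        let e : (ι → κ) ≃ (ι → κ) := (Equiv.arrowCongr σ (.refl κ)).symm
        rw [← e.sum_comp]
        exact Finset.sum_congr rfl fun w _ => (e.sum_comp _).symm
      _ = _ := by simp only [hσ, ← piKronecker_single]; rfl
  have hsum : (Nat.card (Perm ι) : R) • X = ∑ w, ∑ v, X w v •
      ∑ σ : Perm ι, piKronecker R ι κ ((fun i => Matrix.single (w i) (v i) (1 : R)) ∘ σ) := by
    calc (Nat.card (Perm ι) : R) • X = ∑ _σ : Perm ι, X := by simp [Nat.cast_smul_eq_nsmul]
      _ = _ := by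
        rw [Finset.sum_congr rfl fun σ _ => hterm σ, Finset.sum_comm]
        simp only [Finset.sum_comm (s := (Finset.univ : Finset (Perm ι))), Finset.smul_sum]
  rw [← Submodule.smul_mem_iff_of_isUnit _ hcard, hsum]
  exact Submodule.sum_mem _ fun w _ => Submodule.sum_mem _ fun v _ => Submodule.smul_mem _ _ <|
    Submodule.subset_span ⟨_, rfl⟩

end PiKronecker

section Polarization

variable {R ι E F : Type*} [Fintype ι] [DecidableEq ι] [AddCommMonoid E] [AddCommGroup F]

section Semiring

variable [Semiring R] [Module R E] [Module R F]

theorem sum_perm_map_comp_eq (f : MultilinearMap R (fun _ : ι => E) F) (x : ι → E) :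
    ∑ σ : Perm ι, f (x ∘ σ) =
      ∑ s : Finset ι, (-1 : ℤ) ^ s.card • f (fun _ => ∑ j ∈ sᶜ, x j) := by
  let omitting (j : ι) : Finset (ι → ι) := Fintype.piFinset fun _ => {j}ᶜ
  have inf_omitting (s : Finset ι) : s.inf omitting = Fintype.piFinset fun _ => sᶜ := by
    ext r
    simp only [omitting, Finset.mem_inf, Fintype.mem_piFinset, Finset.mem_compl,
      Finset.mem_singleton]
    grind
  have mem_inf_compl (r : ι → ι) :
      r ∈ Finset.univ.inf (fun j => (omitting j)ᶜ) ↔ Function.Bijective r := by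
    rw [← Finite.surjective_iff_bijective]
    simp [omitting, Finset.mem_inf, Function.Surjective]
  -- Bijections are the self-maps omitting no value: apply inclusion-exclusion.
  calc ∑ σ : Perm ι, f (x ∘ σ)
    _ = ∑ r ∈ Finset.univ.inf fun j => (omitting j)ᶜ, f (x ∘ r) :=
      Finset.sum_bij (fun σ _ => σ) (fun σ _ => (mem_inf_compl _).2 σ.bijective)
        (fun _ _ _ _ h => DFunLike.coe_injective h)
        (fun r hr => ⟨.ofBijective r ((mem_inf_compl r).1 hr), Finset.mem_univ _, rfl⟩)
        (fun _ _ => rfl)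
    _ = ∑ s : Finset ι, (-1 : ℤ) ^ s.card • ∑ r ∈ s.inf omitting, f (x ∘ r) := by
      rw [Finset.inclusion_exclusion_sum_inf_compl, Finset.powerset_univ]
    _ = ∑ s : Finset ι, (-1 : ℤ) ^ s.card • f (fun _ => ∑ j ∈ sᶜ, x j) := by
      simp only [inf_omitting, f.map_sum_finset (fun _ j => x j), Function.comp_def]

theorem sum_perm_map_comp_eq_zero {f : MultilinearMap R (fun _ : ι => E) F} {S : AddSubmonoid E}
    (hf : ∀ y ∈ S, f (fun _ => y) = 0) {x : ι → E} (hx : ∀ i, x i ∈ S) :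
    ∑ σ : Perm ι, f (x ∘ σ) = 0 := by
  rw [sum_perm_map_comp_eq]
  exact Finset.sum_eq_zero fun s _ => by rw [hf _ (S.sum_mem fun j _ => hx j), smul_zero]

end Semiring

theorem sum_perm_map_comp_eq_zero_of_span_eq_top
    [CommSemiring R] [Module R E] [Module R F]
    {f : MultilinearMap R (fun _ : ι => E) F} {S : AddSubmonoid E}
    (hS : Submodule.span R (S : Set E) = ⊤) (hf : ∀ y ∈ S, f (fun _ => y) = 0) (x : ι → E) :
    ∑ σ : Perm ι, f (x ∘ σ) = 0 := by
  have hspan (_ : ι) : Submodule.span R (Set.range ((↑) : S → E)) = ⊤ := by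
    rwa [Subtype.range_coe]
  have hsum : ∑ σ : Perm ι, f.domDomCongr σ = 0 :=
    MultilinearMap.ext_of_span_eq_top hspan fun y => by
      simpa using! sum_perm_map_comp_eq_zero hf fun i => (y i).2
  simpa using! congr($hsum x)

end Polarization

section UnitaryGroup

theorem prod_comp_eq_of_infinite {R ι κ : Type*} [CommRing R] [IsDomain R] [Fintype ι] {S : Set R}
    (hS : S.Infinite) {w v : ι → κ}
    (h : ∀ d : κ → R, (∀ j, d j ∈ S) → ∏ i, d (w i) = ∏ i, d (v i)) (d : κ → R) :
    ∏ i, d (w i) = ∏ i, d (v i) := by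
  have hX : ∏ i, MvPolynomial.X (R := R) (w i) = ∏ i, MvPolynomial.X (v i) :=
    MvPolynomial.funext_set (fun _ => S) (fun _ => hS) fun e he => by
      simpa using h e fun j => he j trivial
  simpa using congr(MvPolynomial.eval d $hX)

theorem infinite_unitary_complex : (unitary ℂ : Set ℂ).Infinite := by
  have hsphere : (Metric.sphere (0 : ℂ) 1).Infinite :=
    (isPreconnected_sphere (by simp) 0 1).infinite_of_nontrivial
      ⟨1, by simp, -1, by simp, by norm_num⟩
  refine hsphere.mono fun z hz => ?_
  rw [SetLike.mem_coe, Unitary.mem_iff_star_mul_self, Complex.star_def, Complex.conj_mul',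
    mem_sphere_zero_iff_norm.1 hz]
  simp

theorem diagonal_mem_unitaryGroup {n R : Type*} [Fintype n] [DecidableEq n] [CommRing R]
    [StarRing R] {d : n → R} (hd : ∀ i, d i ∈ unitary R) :
    Matrix.diagonal d ∈ Matrix.unitaryGroup n R := by
  simp only [Matrix.mem_unitaryGroup_iff', Matrix.star_eq_conjTranspose,
    Matrix.diagonal_conjTranspose, Matrix.diagonal_mul_diagonal, Pi.star_apply,
    Unitary.star_mul_self_of_mem (hd _), Matrix.diagonal_one]

theorem commute_diagonal_iff {n R : Type*} [Fintype n] [DecidableEq n] [CommRing R] [IsDomain R]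
    {A : Matrix n n R} {d : n → R} :
    Commute A (Matrix.diagonal d) ↔ ∀ i j, A i j ≠ 0 → d i = d j := by
  simp only [Commute, SemiconjBy, ← Matrix.ext_iff, Matrix.mul_diagonal, Matrix.diagonal_mul]
  refine forall₂_congr fun i j => ?_
  rw [mul_comm, mul_eq_mul_right_iff, eq_comm, or_iff_not_imp_right]

variable {ι κ : Type*} [Fintype ι] [Fintype κ] [DecidableEq ι] [DecidableEq κ]

theorem commute_piKronecker_diagonal {R : Type*} [CommRing R] [IsDomain R] [StarRing R]
    (hR : (unitary R : Set R).Infinite) {A : Matrix (ι → κ) (ι → κ) R}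
    (hA : ∀ U ∈ Matrix.unitaryGroup κ R, Commute A (piKronecker R ι κ fun _ => U)) (d : κ → R) :
    Commute A (piKronecker R ι κ fun _ => Matrix.diagonal d) := by
  rw [piKronecker_diagonal, commute_diagonal_iff]
  refine fun w v hwv => prod_comp_eq_of_infinite hR (fun u hu => ?_) d
  have hu := hA _ (diagonal_mem_unitaryGroup hu)
  rw [piKronecker_diagonal, commute_diagonal_iff] at hu
  exact hu w v hwv

variable {A : Matrix (ι → κ) (ι → κ) ℂ}

theorem commute_piKronecker_of_isHermitian
    (hA : ∀ U ∈ Matrix.unitaryGroup κ ℂ, Commute A (piKronecker ℂ ι κ fun _ => U))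
    {H : Matrix κ κ ℂ} (hH : H.IsHermitian) :
    Commute A (piKronecker ℂ ι κ fun _ => H) := by
  have hfactor : (piKronecker ℂ ι κ fun _ => H) =
      (piKronecker ℂ ι κ fun _ => hH.eigenvectorUnitary) *
        (piKronecker ℂ ι κ fun _ => Matrix.diagonal (RCLike.ofReal ∘ hH.eigenvalues)) *
          piKronecker ℂ ι κ fun _ => star hH.eigenvectorUnitary := by
    rw [piKronecker_mul, piKronecker_mul]
    exact congrArg (piKronecker ℂ ι κ) (funext fun _ => hH.spectral_theorem)
  rw [hfactor]
  exact ((hA _ (SetLike.coe_mem _)).mul_right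
    (commute_piKronecker_diagonal infinite_unitary_complex hA _)).mul_right
      (hA _ (SetLike.coe_mem (star hH.eigenvectorUnitary)))

theorem commute_sum_piKronecker_comp
    (hA : ∀ U ∈ Matrix.unitaryGroup κ ℂ, Commute A (piKronecker ℂ ι κ fun _ => U))
    (M : ι → Matrix κ κ ℂ) :
    Commute A (∑ σ : Perm ι, piKronecker ℂ ι κ (M ∘ σ)) := by
  let commutator : Matrix (ι → κ) (ι → κ) ℂ →ₗ[ℂ] Matrix (ι → κ) (ι → κ) ℂ :=
    LinearMap.mulLeft ℂ A - LinearMap.mulRight ℂ A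
  have h := sum_perm_map_comp_eq_zero_of_span_eq_top
    (f := commutator.compMultilinearMap (piKronecker ℂ ι κ))
    (S := (selfAdjoint (Matrix κ κ ℂ)).toAddSubmonoid) span_selfAdjoint
    (fun H hH => sub_eq_zero.2 (commute_piKronecker_of_isHermitian hA hH)) M
  refine sub_eq_zero.1 (?_ : commutator _ = 0)
  rw [map_sum]
  exact h

theorem mem_span_range_wordPermMatrix_iff :
    A ∈ Submodule.span ℂ (Set.range (wordPermMatrix ℂ κ (ι := ι))) ↔
      ∀ U ∈ Matrix.unitaryGroup κ ℂ, Commute A (piKronecker ℂ ι κ fun _ => U) := by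
  refine ⟨fun hA U _ => ?_, fun hA => ?_⟩
  · suffices Submodule.span ℂ (Set.range (wordPermMatrix ℂ κ)) ≤
        (Subalgebra.centralizer ℂ {piKronecker ℂ ι κ fun _ => U}).toSubmodule from
      (this hA _ rfl).symm
    rw [Submodule.span_le, Set.range_subset_iff]
    rintro π _ rfl
    exact (commute_wordPermMatrix_piKronecker π U).symm
  · rw [← range_wordPermMatrixHom]
    refine matrix_mem_span_range_of_mem_centralizer_centralizer _ fun X hX => ?_
    rw [range_wordPermMatrixHom] at hX
    have hspan := mem_span_range_sum_piKronecker_comp (NeZero.ne _).isUnit fun π => hX _ ⟨π, rfl⟩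
    suffices Submodule.span ℂ (Set.range fun M => ∑ σ : Perm ι, piKronecker ℂ ι κ (M ∘ σ)) ≤
        (Subalgebra.centralizer ℂ {A}).toSubmodule from (this hspan _ rfl).symm
    rw [Submodule.span_le, Set.range_subset_iff]
    rintro M _ rfl
    exact commute_sum_piKronecker_comp hA M

end UnitaryGroup

section TensorPower

open scoped TensorProduct

variable {R ι κ : Type*} [CommRing R] [Fintype ι] [DecidableEq ι] [Fintype κ] [DecidableEq κ]

variable (R ι κ) in
/-- The matrices of the endomorphisms of a tensor power of `κ → R`, with respect to the basis of
pure tensors of standard basis vectors, which is indexed by words. -/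
def tensorMatrixEquiv :
    Module.End R (⨂[R] _ : ι, (κ → R)) ≃ₐ[R] Matrix (ι → κ) (ι → κ) R :=
  LinearMap.toMatrixAlgEquiv (Basis.piTensorProduct fun _ : ι => Pi.basisFun R κ)

theorem tensorMatrixEquiv_apply (T : Module.End R (⨂[R] _ : ι, (κ → R))) (w v : ι → κ) :
    tensorMatrixEquiv R ι κ T w v = (Basis.piTensorProduct fun _ : ι => Pi.basisFun R κ).repr
      (T (PiTensorProduct.tprod R fun i => Pi.single (v i) 1)) w := by
  simp [tensorMatrixEquiv, LinearMap.toMatrixAlgEquiv_apply, Basis.piTensorProduct_apply]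

theorem tensorMatrixEquiv_eq_wordPermMatrix {π : Perm ι} {T : Module.End R (⨂[R] _ : ι, (κ → R))}
    (hT : ∀ v : ι → κ → R,
      T (PiTensorProduct.tprod R v) = PiTensorProduct.tprod R fun i => v (π i)) :
    tensorMatrixEquiv R ι κ T = wordPermMatrix R κ π := by
  ext w v
  rw [tensorMatrixEquiv_apply, hT, Basis.piTensorProduct_repr_tprod_apply, wordPermMatrix_apply]
  simp [Pi.single_apply, Fintype.prod_ite_zero, funext_iff]

theorem tensorMatrixEquiv_map (M : ι → Matrix κ κ R) :
    tensorMatrixEquiv R ι κ (PiTensorProduct.map fun i => (M i).toLin') =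
      piKronecker R ι κ M := by
  ext w v
  rw [tensorMatrixEquiv_apply, PiTensorProduct.map_tprod, Basis.piTensorProduct_repr_tprod_apply,
    piKronecker_apply]
  simp

end TensorPower

/-- The family `{T_l(π) : π ∈ S_n, L⁻(π) ≤ l}` is a basis (linearly independent and
spanning) of the commutant `C_n(U(l)) = {A : A ∘ U^{⊗n} = U^{⊗n} ∘ A for all U ∈ U(l)}`,
where `T_l(π)(v₁⊗⋯⊗v_n) = v_{π(1)}⊗⋯⊗v_{π(n)}` and `L⁻(π)` is the length of the
longest strictly decreasing subsequence of `π`. -/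
theorem Tl_basis_of_commutant (n l : ℕ)
    (T : Equiv.Perm (Fin n) → Module.End ℂ (⨂[ℂ] _ : Fin n, (Fin l → ℂ)))
    (hT : ∀ (π : Equiv.Perm (Fin n)) (v : Fin n → (Fin l → ℂ)),
      T π (PiTensorProduct.tprod ℂ v) = PiTensorProduct.tprod ℂ (fun i => v (π i))) :
    LinearIndependent ℂ
      (fun π : {π : Equiv.Perm (Fin n) // decLE π l} => T π.1) ∧
    (Submodule.span ℂ
        (Set.range (fun π : {π : Equiv.Perm (Fin n) // decLE π l} => T π.1)) :
      Set (Module.End ℂ (⨂[ℂ] _ : Fin n, (Fin l → ℂ)))) =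
      {A | ∀ U : Matrix.unitaryGroup (Fin l) ℂ,
        A * tpow n l (U : Matrix (Fin l) (Fin l) ℂ) =
          tpow n l (U : Matrix (Fin l) (Fin l) ℂ) * A} := by
  let e := tensorMatrixEquiv ℂ (Fin n) (Fin l)
  have heT (π) : e (T π) = wordPermMatrix ℂ (Fin l) π := tensorMatrixEquiv_eq_wordPermMatrix (hT π)
  have heU (U) : e (tpow n l U) = piKronecker ℂ _ _ fun _ => U := tensorMatrixEquiv_map _
  have hcomp : e.toLinearMap ∘ (fun π : {π : Perm (Fin n) // decLE π l} => T π.1) =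
      fun π => wordPermMatrix ℂ (Fin l) π.1 := funext fun π => heT π.1
  refine ⟨.of_comp e.toLinearMap ?_, Set.ext fun A => ?_⟩
  · rw [hcomp]
    exact linearIndependent_wordPermMatrix_decLE (Fintype.card_fin l).ge
  · rw [SetLike.mem_coe, ← Submodule.apply_mem_span_image_iff_mem_span (f := e.toLinearMap)
      e.injective, ← Set.range_comp, hcomp,
      span_range_wordPermMatrix_decLE (Fintype.card_fin l).le]
    refine mem_span_range_wordPermMatrix_iff.trans ?_
    simp [Commute, SemiconjBy, ← heU, ← map_mul]
end
end
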